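/- arXiv:2211.11241 — 2 statements merged into one kernel-verified Lean document; each statement's English description precedes it below -/
import Mathlib

section
/- If t ∈ (0,1) is irrational, then the Hausdorff dimension of C_t equals 1. -/
open Filter Topology

/-- The digit set `Ω_t = {0, 3t, 3, 3t+3}`. -/
def Omega (t : ℝ) : Set ℝ := {0, 3*t, 3, 3*t+3}

/-- The projection `C_t` of the four corner Cantor set:
the set of sums `∑_{i≥1} d_i 4^{-i}` with all digits `d_i ∈ Ω_t`. -/
noncomputable def cornerC (t : ℝ) : Set ℝ :=
  {x | ∃ d : ℕ → ℝ, (∀ i, d i ∈ Omega t) ∧ x = ∑' i : ℕ, d i / 4^(i+1)}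

open Filter Topology

namespace FC
open MeasureTheory Finset
open scoped AddMonoidAlgebra

abbrev R := AddMonoidAlgebra ℝ ℝ
noncomputable abbrev H := Lp ℝ 2 (volume : Measure ℝ)

noncomputable def Lam (x : ℝ) : ℝ := max 0 (1 - |x|)

noncomputable def e (x : ℝ) : H :=
  indicatorConstLp 2 (measurableSet_Ico (a := x) (b := x + 1)) (by simp) (1:ℝ)

lemma inner_e (x y : ℝ) : inner ℝ (e x) (e y) = Lam (x - y) := by
  unfold e
  rw [L2.inner_indicatorConstLp_indicatorConstLp (hμs := by simp) (hμt := by simp)]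
  simp only [Set.Ico_inter_Ico, Lam]
  simp
  rcases le_total x y with h | h
  · rw [max_eq_right h, min_eq_left (by linarith), abs_of_nonpos (by linarith), max_comm]
    congr 1; ring
  · rw [max_eq_left h, min_eq_right (by linarith), abs_of_nonneg (by linarith), max_comm]
    congr 1; ring

noncomputable def δ (x : ℝ) : R := AddMonoidAlgebra.single x 1

lemma δ_mul (x y : ℝ) : δ x * δ y = δ (x + y) := by
  simp [δ, AddMonoidAlgebra.single_mul_single]

lemma δ_zero : δ 0 = 1 := rfl

noncomputable def J : R →ₗ[ℝ] H where
  toFun μ := Finsupp.linearCombination ℝ e μ.coeff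
  map_add' := by intro a b; simp
  map_smul' := by intro a b; simp

lemma J_δ (x : ℝ) : J (δ x) = e x := by
  simp [J, δ]

lemma R_ind {p : R → Prop} (μ : R) (h1 : ∀ x, p (δ x)) (h2 : ∀ a b, p a → p b → p (a + b))
    (h3 : ∀ (c : ℝ) a, p a → p (c • a)) : p μ := by
  induction μ using AddMonoidAlgebra.induction_on with
  | of m => exact h1 _
  | add f g hf hg => exact h2 _ _ hf hg
  | smul r f hf => exact h3 _ _ hf

lemma inner_shift (x : ℝ) (μ ν : R) :
    inner ℝ (J (δ x * μ)) (J ν) = inner ℝ (J μ) (J (δ (-x) * ν)) := by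
  induction μ using R_ind with
  | h1 y =>
    induction ν using R_ind with
    | h1 z => simp only [δ_mul, J_δ, inner_e]; congr 1; ring
    | h2 a b ha hb => simp only [mul_add, map_add, inner_add_right, ha, hb]
    | h3 c a ha => simp only [mul_smul_comm, map_smul, inner_smul_right, ha]
  | h2 a b ha hb => simp only [mul_add, map_add, inner_add_left, ha, hb]
  | h3 c a ha => simp only [mul_smul_comm, map_smul, inner_smul_left, ha]

noncomputable def nrm (μ : R) : ℝ := ‖J μ‖

lemma nrm_nonneg (μ : R) : 0 ≤ nrm μ := norm_nonneg _

lemma nrm_sq (μ : R) : nrm μ ^ 2 = inner ℝ (J μ) (J μ) := by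
  rw [real_inner_self_eq_norm_sq]; rfl

lemma nrm_shift (x : ℝ) (μ : R) : nrm (δ x * μ) = nrm μ := by
  have : nrm (δ x * μ) ^ 2 = nrm μ ^ 2 := by
    rw [nrm_sq, nrm_sq, inner_shift, ← mul_assoc, δ_mul]
    simp [δ_zero]
  exact (pow_left_inj₀ (nrm_nonneg _) (nrm_nonneg _) two_ne_zero).1 this

lemma nrm_add (μ ν : R) : nrm (μ + ν) ≤ nrm μ + nrm ν := by
  unfold nrm; rw [map_add]; exact norm_add_le _ _

lemma nrm_smul (c : ℝ) (hc : 0 ≤ c) (μ : R) : nrm (c • μ) = c * nrm μ := by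
  unfold nrm; rw [map_smul, norm_smul, Real.norm_of_nonneg hc]

lemma nrm_sum {ι : Type*} (s : Finset ι) (f : ι → R) : nrm (∑ i ∈ s, f i) ≤ ∑ i ∈ s, nrm (f i) := by
  unfold nrm; rw [map_sum]; exact norm_sum_le _ _

lemma nrm_one : nrm 1 = 1 := by
  have : nrm 1 ^ 2 = 1 := by
    rw [nrm_sq, ← δ_zero, J_δ, inner_e]; simp [Lam]
  have h := nrm_nonneg 1
  nlinarith

lemma inner_le (μ ν : R) : inner ℝ (J μ) (J ν) ≤ nrm μ * nrm ν := real_inner_le_norm _ _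

/-- mixture contraction -/
lemma nrm_mix {ι : Type*} (s : Finset ι) (w : ι → ℝ) (p : ι → ℝ) (μ : R) (hw : ∀ i ∈ s, 0 ≤ w i) :
    nrm (μ * ∑ i ∈ s, w i • δ (p i)) ≤ (∑ i ∈ s, w i) * nrm μ := by
  rw [Finset.mul_sum, Finset.sum_mul]
  refine (nrm_sum _ _).trans (Finset.sum_le_sum fun i hi => ?_)
  rw [mul_smul_comm, nrm_smul _ (hw i hi), mul_comm μ, nrm_shift]

/-- support -/
noncomputable def supp (I : Set ℝ) : Submodule ℝ R := Submodule.span ℝ (δ '' I)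

lemma δ_mem {I : Set ℝ} {x : ℝ} (h : x ∈ I) : δ x ∈ supp I :=
  Submodule.subset_span ⟨x, h, rfl⟩

lemma supp_mono {I K : Set ℝ} (h : I ⊆ K) : supp I ≤ supp K :=
  Submodule.span_mono (Set.image_mono h)

lemma supp_mul {a b c d : ℝ} {μ ν : R} (hμ : μ ∈ supp (Set.Icc a b)) (hν : ν ∈ supp (Set.Icc c d)) :
    μ * ν ∈ supp (Set.Icc (a + c) (b + d)) := by
  have h := Submodule.mul_mem_mul hμ hν
  unfold supp at h
  rw [Submodule.span_mul_span] at h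
  refine Submodule.span_mono ?_ h
  rintro _ ⟨_, ⟨x, hx, rfl⟩, _, ⟨y, hy, rfl⟩, rfl⟩
  exact ⟨x + y, ⟨add_le_add hx.1 hy.1, add_le_add hx.2 hy.2⟩, (δ_mul x y).symm⟩

lemma supp_shift {a b c d : ℝ} {μ : R} (x : ℝ) (hμ : μ ∈ supp (Set.Icc a b)) (hc : c = x + a)
    (hd : d = x + b) : δ x * μ ∈ supp (Set.Icc c d) := by
  subst hc hd
  exact supp_mul (δ_mem ⟨le_rfl, le_rfl⟩) hμ

lemma supp_prod {ι : Type*} (s : Finset ι) (f : ι → R) (a b : ι → ℝ)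
    (h : ∀ i ∈ s, f i ∈ supp (Set.Icc (a i) (b i))) :
    ∏ i ∈ s, f i ∈ supp (Set.Icc (∑ i ∈ s, a i) (∑ i ∈ s, b i)) := by
  classical
  induction s using Finset.induction_on with
  | empty => simpa [δ_zero] using δ_mem (I := Set.Icc 0 0) (x := 0) (by simp)
  | insert i s hi ih =>
    rw [Finset.prod_insert hi, Finset.sum_insert hi, Finset.sum_insert hi]
    exact supp_mul (h i (by simp)) (ih fun j hj => h j (by simp [hj]))

lemma inner_far {I K : Set ℝ} (hIK : ∀ x ∈ I, ∀ y ∈ K, 1 ≤ |x - y|) {μ ν : R}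
    (hμ : μ ∈ supp I) (hν : ν ∈ supp K) : inner ℝ (J μ) (J ν) = 0 := by
  induction hμ using Submodule.span_induction with
  | mem _ h =>
    obtain ⟨x, hx, rfl⟩ := h
    induction hν using Submodule.span_induction with
    | mem _ h =>
      obtain ⟨y, hy, rfl⟩ := h
      rw [J_δ, J_δ, inner_e, Lam, max_eq_left]
      linarith [hIK x hx y hy]
    | zero => simp
    | add a b _ _ ha hb => simp [inner_add_right, ha, hb]
    | smul c a _ ha => simp [inner_smul_right, ha]
  | zero => simp
  | add a b _ _ ha hb => simp [inner_add_left, ha, hb]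
  | smul c a _ ha => simp [inner_smul_left, ha]

/-- near-collision sums -/
noncomputable def coll {ι : Type*} (s : Finset ι) (w p : ι → ℝ) (r : ℝ) : ℝ :=
  ∑ i ∈ s, ∑ j ∈ s, if |p i - p j| < r then w i * w j else 0

lemma coll_mono {ι : Type*} (s : Finset ι) (w p : ι → ℝ) (hw : ∀ i ∈ s, 0 ≤ w i) {r r' : ℝ}
    (h : r ≤ r') : coll s w p r ≤ coll s w p r' := by
  refine Finset.sum_le_sum fun i hi => Finset.sum_le_sum fun j hj => ?_
  have := mul_nonneg (hw i hi) (hw j hj)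
  split_ifs <;> linarith

lemma C1 {ι : Type*} (s : Finset ι) (w p : ι → ℝ) (μ : ι → R) (hw : ∀ i ∈ s, 0 ≤ w i)
    {W B : ℝ} (hW : 1 ≤ W)
    (hs : ∀ i ∈ s, μ i ∈ supp (Set.Icc 0 (2 * W))) (hB : ∀ i ∈ s, nrm (μ i) ≤ B) :
    nrm (∑ i ∈ s, w i • (δ (p i) * μ i)) ^ 2 ≤ B ^ 2 * coll s w p (3 * W) := by
  rw [nrm_sq, map_sum, sum_inner, coll, Finset.mul_sum]
  refine Finset.sum_le_sum fun i hi => ?_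
  rw [inner_sum, Finset.mul_sum]
  refine Finset.sum_le_sum fun j hj => ?_
  have hwi := hw i hi
  have hwj := hw j hj
  simp only [map_smul, inner_smul_left, inner_smul_right, conj_trivial]
  split_ifs with h
  · have h1 := inner_le (δ (p i) * μ i) (δ (p j) * μ j)
    rw [nrm_shift, nrm_shift] at h1
    have h2 : nrm (μ i) * nrm (μ j) ≤ B * B :=
      mul_le_mul (hB i hi) (hB j hj) (nrm_nonneg _) ((nrm_nonneg _).trans (hB i hi))
    calc _ = (w i * w j) * inner ℝ (J (δ (p i) * μ i)) (J (δ (p j) * μ j)) := by ring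
      _ ≤ (w i * w j) * (B * B) :=
        mul_le_mul_of_nonneg_left (h1.trans h2) (mul_nonneg hwi hwj)
      _ = _ := by ring
  · rw [inner_far (I := Set.Icc (p i) (p i + 2 * W)) (K := Set.Icc (p j) (p j + 2 * W)) _
      (supp_shift (p i) (hs i hi) (by ring) (by ring))
      (supp_shift (p j) (hs j hj) (by ring) (by ring))]
    · simp
    · rintro x ⟨hx1, hx2⟩ y ⟨hy1, hy2⟩
      push Not at h
      rcases le_abs.1 h with h | h
      · exact le_abs.2 (Or.inl (by linarith))
      · exact le_abs.2 (Or.inr (by linarith))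

lemma part_unity (x : ℝ) (hx : |x| < 4) :
    1 ≤ ∑ v ∈ Finset.Icc (-4 : ℤ) 4, Lam (x - v) := by
  rw [abs_lt] at hx
  have h0 := Int.floor_le x
  have h1 := Int.lt_floor_add_one x
  set m := ⌊x⌋
  have hm1 : -4 ≤ m := by
    have : (-5 : ℝ) < m := by linarith
    have : (-5 : ℤ) < m := by exact_mod_cast this
    omega
  have hm2 : m < 4 := by
    have : (m : ℝ) < 4 := by linarith
    exact_mod_cast this
  have hsub : ({m, m + 1} : Finset ℤ) ⊆ Finset.Icc (-4 : ℤ) 4 := by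
    intro y hy
    simp at hy ⊢
    omega
  refine le_trans ?_ (Finset.sum_le_sum_of_subset_of_nonneg hsub fun _ _ _ => le_max_left _ _)
  rw [Finset.sum_pair (by omega)]
  have a1 : 1 - (x - m) ≤ Lam (x - m) := by
    unfold Lam; rw [abs_of_nonneg (by linarith)]; exact le_max_right _ _
  have a2 : x - m ≤ Lam (x - ((m + 1 : ℤ) : ℝ)) := by
    unfold Lam; push_cast; rw [abs_of_nonpos (by linarith)]
    refine le_trans ?_ (le_max_right _ _)
    linarith
  linarith

lemma C2 {ι : Type*} (s : Finset ι) (w p : ι → ℝ) (hw : ∀ i ∈ s, 0 ≤ w i)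
    {W : ℝ} (hW : 0 < W) :
    coll s w p (4 * W) ≤ 9 * nrm (∑ i ∈ s, w i • δ (p i / W)) ^ 2 := by
  set ν := ∑ i ∈ s, w i • δ (p i / W) with hν
  have key : ∀ v : ℤ, inner ℝ (J ν) (J (δ v * ν)) ≤ nrm ν ^ 2 := by
    intro v
    have := inner_le ν (δ v * ν)
    rw [nrm_shift] at this
    nlinarith
  have hexp : ∀ v : ℤ, inner ℝ (J ν) (J (δ v * ν)) =
      ∑ i ∈ s, ∑ j ∈ s, w i * w j * Lam ((p i - p j) / W - v) := by
    intro v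
    rw [hν, Finset.mul_sum, map_sum, map_sum, sum_inner]
    refine Finset.sum_congr rfl fun i _ => ?_
    rw [inner_sum]
    refine Finset.sum_congr rfl fun j _ => ?_
    simp only [map_smul, inner_smul_left, inner_smul_right, conj_trivial, mul_smul_comm, δ_mul,
      J_δ, inner_e]
    rw [show p i / W - (v + p j / W) = (p i - p j) / W - v by ring]
    ring
  calc coll s w p (4 * W) ≤ ∑ i ∈ s, ∑ j ∈ s, ∑ v ∈ Finset.Icc (-4 : ℤ) 4,
        w i * w j * Lam ((p i - p j) / W - v) := by
        refine Finset.sum_le_sum fun i hi => Finset.sum_le_sum fun j hj => ?_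
        have h0 := mul_nonneg (hw i hi) (hw j hj)
        rw [← Finset.mul_sum]
        split_ifs with h
        · refine le_mul_of_one_le_right h0 (part_unity _ ?_)
          rw [abs_div, abs_of_pos hW, div_lt_iff₀ hW]; exact h
        · exact mul_nonneg h0 (Finset.sum_nonneg fun _ _ => le_max_left _ _)
    _ = ∑ v ∈ Finset.Icc (-4 : ℤ) 4, inner ℝ (J ν) (J (δ v * ν)) := by
        simp_rw [hexp]
        symm
        rw [Finset.sum_comm]
        exact Finset.sum_congr rfl fun i _ => Finset.sum_comm
    _ ≤ ∑ v ∈ Finset.Icc (-4 : ℤ) 4, nrm ν ^ 2 := Finset.sum_le_sum fun v _ => key v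
    _ = _ := by simp

lemma adj (ρ : R) : ∃ ρ' : R, ∀ μ ν : R,
    inner ℝ (J (ρ * μ)) (J ν) = inner ℝ (J μ) (J (ρ' * ν)) := by
  induction ρ using R_ind with
  | h1 x => exact ⟨δ (-x), fun μ ν => inner_shift x μ ν⟩
  | h2 a b ha hb =>
    obtain ⟨a', ha⟩ := ha
    obtain ⟨b', hb⟩ := hb
    exact ⟨a' + b', fun μ ν => by simp only [add_mul, map_add, inner_add_left, inner_add_right, ha, hb]⟩
  | h3 c a ha =>
    obtain ⟨a', ha⟩ := ha
    exact ⟨c • a', fun μ ν => by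
      simp only [smul_mul_assoc, map_smul, inner_smul_left, inner_smul_right, ha, conj_trivial]⟩

lemma logconv (μ ρ : R) (j : ℕ) :
    nrm (ρ ^ (j+1) * μ) ^ 2 ≤ nrm (ρ ^ j * μ) * nrm (ρ ^ (j+2) * μ) := by
  obtain ⟨ρ', h⟩ := adj ρ
  have hn : ∀ ν, nrm (ρ' * ν) = nrm (ρ * ν) := by
    intro ν
    have : nrm (ρ' * ν) ^ 2 = nrm (ρ * ν) ^ 2 := by
      rw [nrm_sq, nrm_sq, ← h (ρ' * ν) ν, h ν (ρ * ν), real_inner_comm, mul_left_comm]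
    exact (pow_left_inj₀ (nrm_nonneg _) (nrm_nonneg _) two_ne_zero).1 this
  rw [nrm_sq]
  have e1 : ρ ^ (j+1) * μ = ρ * (ρ ^ j * μ) := by ring
  conv_lhs => rw [e1, h, ← e1]
  refine (inner_le _ _).trans (le_of_eq ?_)
  rw [hn]; congr 2; ring

lemma ratio (μ ρ : R) (j : ℕ) :
    nrm (ρ * μ) * nrm (ρ ^ j * μ) ≤ nrm μ * nrm (ρ ^ (j+1) * μ) := by
  induction j with
  | zero => simp [mul_comm]
  | succ j ih =>
    have h := logconv μ ρ j
    have n0 := nrm_nonneg (ρ ^ j * μ)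
    have n1 := nrm_nonneg (ρ ^ (j+1) * μ)
    have n2 := nrm_nonneg (ρ ^ (j+2) * μ)
    have n3 := nrm_nonneg μ
    rcases n0.eq_or_lt with h0 | h0
    · rw [← h0] at h
      have : nrm (ρ ^ (j+1) * μ) = 0 := by nlinarith
      rw [this]; simp; positivity
    · have : nrm (ρ ^ j * μ) * (nrm (ρ * μ) * nrm (ρ ^ (j+1) * μ)) ≤
          nrm (ρ ^ j * μ) * (nrm μ * nrm (ρ ^ (j+2) * μ)) := by
        calc _ = (nrm (ρ * μ) * nrm (ρ ^ j * μ)) * nrm (ρ ^ (j+1) * μ) := by ring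
          _ ≤ (nrm μ * nrm (ρ ^ (j+1) * μ)) * nrm (ρ ^ (j+1) * μ) :=
            mul_le_mul_of_nonneg_right ih n1
          _ = nrm μ * nrm (ρ ^ (j+1) * μ) ^ 2 := by ring
          _ ≤ nrm μ * (nrm (ρ ^ j * μ) * nrm (ρ ^ (j+2) * μ)) := mul_le_mul_of_nonneg_left h n3
          _ = _ := by ring
      exact le_of_mul_le_mul_left this h0

lemma jensen (μ ρ : R) (k : ℕ) :
    nrm (ρ * μ) ^ (k+1) ≤ nrm μ ^ k * nrm (ρ ^ (k+1) * μ) := by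
  induction k with
  | zero => simp
  | succ k ih =>
    calc nrm (ρ * μ) ^ (k+2) = nrm (ρ * μ) * nrm (ρ * μ) ^ (k+1) := by ring
      _ ≤ nrm (ρ * μ) * (nrm μ ^ k * nrm (ρ ^ (k+1) * μ)) :=
        mul_le_mul_of_nonneg_left ih (nrm_nonneg _)
      _ = nrm μ ^ k * (nrm (ρ * μ) * nrm (ρ ^ (k+1) * μ)) := by ring
      _ ≤ nrm μ ^ k * (nrm μ * nrm (ρ ^ (k+2) * μ)) :=
        mul_le_mul_of_nonneg_left (ratio μ ρ (k+1)) (pow_nonneg (nrm_nonneg _) _)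
      _ = _ := by ring
end FC

open Filter Topology

namespace FC
open MeasureTheory Finset

lemma C12 {ι : Type*} (s : Finset ι) (w p : ι → ℝ) (μ : ι → R) (hw : ∀ i ∈ s, 0 ≤ w i)
    {W B : ℝ} (hW : 1 ≤ W)
    (hs : ∀ i ∈ s, μ i ∈ supp (Set.Icc 0 (2 * W))) (hB : ∀ i ∈ s, nrm (μ i) ≤ B) :
    nrm (∑ i ∈ s, w i • (δ (p i) * μ i)) ^ 2 ≤
      B ^ 2 * (9 * nrm (∑ i ∈ s, w i • δ (p i / W)) ^ 2) := by
  refine (C1 s w p μ hw hW hs hB).trans (mul_le_mul_of_nonneg_left ?_ (sq_nonneg B))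
  exact (coll_mono s w p hw (by linarith)).trans (C2 s w p hw (by linarith))

def D : ℕ → Finset ℕ
  | 0 => {0}
  | n+1 => D n ∪ (D n).image (· + 4^n)

lemma D_lt {n : ℕ} : ∀ a ∈ D n, 3 * a + 1 ≤ 4 ^ n := by
  induction n with
  | zero => simp [D]
  | succ n ih =>
    intro a ha
    simp only [D, mem_union, mem_image] at ha
    rw [pow_succ]
    rcases ha with ha | ⟨b, hb, rfl⟩
    · have := ih a ha; omega
    · have := ih b hb; omega

lemma D_disj (n : ℕ) : Disjoint (D n) ((D n).image (· + 4^n)) := by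
  rw [Finset.disjoint_left]
  intro a ha hb
  simp only [mem_image] at hb
  obtain ⟨b, hb, rfl⟩ := hb
  have := D_lt _ ha
  omega

lemma D_card (n : ℕ) : (D n).card = 2 ^ n := by
  induction n with
  | zero => simp [D]
  | succ n ih =>
    rw [D, Finset.card_union_of_disjoint (D_disj n), Finset.card_image_of_injective _
      (add_left_injective _), ih]; ring

lemma D_zero_mem (n : ℕ) : 0 ∈ D n := by
  induction n with
  | zero => simp [D]
  | succ n ih => simp [D, ih]

noncomputable def S (t : ℝ) (n : ℕ) (c : ℝ) : R :=
  ∏ i ∈ range n, (1/4 : ℝ) • ((1 + δ (c * 4^i)) * (1 + δ (c * t * 4^i)))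

lemma S_zero (t c : ℝ) : S t 0 c = 1 := by simp [S]

lemma S_add (t : ℝ) (n m : ℕ) (c : ℝ) : S t (n + m) c = S t n c * S t m (c * 4^n) := by
  unfold S
  rw [Finset.prod_range_add]
  congr 1
  refine Finset.prod_congr rfl fun i _ => ?_
  rw [show c * 4 ^ (n + i) = c * 4 ^ n * 4 ^ i by ring,
    show c * t * 4 ^ (n + i) = c * 4 ^ n * t * 4 ^ i by ring]

lemma S_supp (t : ℝ) (h0 : 0 ≤ t) (h1 : t ≤ 1) (n : ℕ) (c : ℝ) (hc : 0 ≤ c) :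
    S t n c ∈ supp (Set.Icc 0 (c * 4^n)) := by
  have := supp_prod (range n) (fun i => (1/4 : ℝ) • ((1 + δ (c * 4^i)) * (1 + δ (c * t * 4^i))))
    (fun _ => 0) (fun i => c * 4^i + c * t * 4^i) (by
      intro i _
      refine Submodule.smul_mem _ _ ?_
      rw [show (0:ℝ) = 0 + 0 by ring, ← δ_zero]
      have a1 : 0 ≤ c * 4^i := by positivity
      have a2 : 0 ≤ c * t * 4^i := by positivity
      refine supp_mul (add_mem ?_ ?_) (add_mem ?_ ?_) <;> exact δ_mem (by constructor <;> linarith))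
  refine supp_mono ?_ this
  simp only [Finset.sum_const_zero]
  refine Set.Icc_subset_Icc le_rfl ?_
  have key : ∀ n : ℕ, ∑ i ∈ range n, (c * 4^i + c * t * 4^i) ≤ c * 4^n := by
    intro n
    induction n with
    | zero => simpa using hc
    | succ n ih =>
      rw [Finset.sum_range_succ, pow_succ]
      have a1 : 0 ≤ c * 4^n := by positivity
      have : c * t * 4^n ≤ c * 4^n := by nlinarith
      linarith
  exact key n

lemma sD (n : ℕ) (c : ℝ) : ∏ i ∈ range n, (1 + δ (c * 4^i)) = ∑ a ∈ D n, δ (c * a) := by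
  induction n with
  | zero => simp [D, δ_zero]
  | succ n ih =>
    rw [Finset.prod_range_succ, ih, D, Finset.sum_union (D_disj n),
      Finset.sum_image (fun _ _ _ _ h => by simpa using h), mul_add, mul_one, Finset.sum_mul]
    congr 1
    refine Finset.sum_congr rfl fun a _ => ?_
    rw [δ_mul]; push_cast; congr 1; ring

lemma S_expand (t : ℝ) (n : ℕ) (c : ℝ) :
    S t n c = ∑ q ∈ D n ×ˢ D n, (1/4 : ℝ)^n • δ (c * (q.1 + t * q.2)) := by
  unfold S
  rw [← Finset.smul_sum, Finset.sum_product]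
  have : ∑ x ∈ D n, ∑ y ∈ D n, δ (c * (x + t * y)) =
      (∑ a ∈ D n, δ (c * a)) * (∑ a ∈ D n, δ (c * t * a)) := by
    rw [Finset.sum_mul_sum]
    refine Finset.sum_congr rfl fun a _ => Finset.sum_congr rfl fun b _ => ?_
    rw [δ_mul]; congr 1; ring
  simp only [this]
  rw [← sD, ← sD, ← Finset.prod_mul_distrib]
  simp only [Algebra.smul_def, Finset.prod_mul_distrib, Finset.prod_const, map_pow, card_range]

noncomputable def En (t : ℝ) (n : ℕ) : ℝ := nrm (S t n 1) ^ 2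

lemma split (t : ℝ) (m : ℕ) {W : ℝ} (hW : 1 ≤ W) (y : ℝ) (μ : R)
    (hμ : μ ∈ supp (Set.Icc y (y + 2 * W))) :
    nrm (S t m W * μ) ^ 2 ≤ 9 * En t m * nrm μ ^ 2 := by
  have hW0 : W ≠ 0 := by linarith
  have h := C12 (D m ×ˢ D m) (fun _ => (1/4:ℝ)^m) (fun q => W * (q.1 + t * q.2))
    (fun _ => δ (-y) * μ) (fun _ _ => by positivity) (B := nrm μ) hW
    (fun _ _ => supp_shift (-y) hμ (by ring) (by ring)) (fun _ _ => by rw [nrm_shift])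
  have e1 : ∑ q ∈ D m ×ˢ D m, (1/4:ℝ)^m • (δ (W * (q.1 + t * q.2)) * (δ (-y) * μ)) =
      δ (-y) * (S t m W * μ) := by
    rw [S_expand, Finset.sum_mul, Finset.mul_sum]
    refine Finset.sum_congr rfl fun q _ => ?_
    rw [smul_mul_assoc, mul_smul_comm]; congr 1; ring
  have e2 : ∑ q ∈ D m ×ˢ D m, (1/4:ℝ)^m • δ (W * (q.1 + t * q.2) / W) = S t m 1 := by
    rw [S_expand]
    refine Finset.sum_congr rfl fun q _ => ?_
    rw [one_mul, mul_div_cancel_left₀ _ hW0]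
  rw [e1, e2, nrm_shift] at h
  refine h.trans (le_of_eq ?_)
  unfold En; ring

lemma En_sub (t : ℝ) (h0 : 0 ≤ t) (h1 : t ≤ 1) (n m : ℕ) :
    En t (n + m) ≤ 9 * En t n * En t m := by
  have := split t m (W := 4^n) (one_le_pow₀ (by norm_num)) 0 (S t n 1)
    (supp_mono (Set.Icc_subset_Icc le_rfl (by
      have : (0:ℝ) ≤ 4^n := by positivity
      linarith)) (S_supp t h0 h1 n 1 (by norm_num)))
  have e : En t (n+m) = nrm (S t m (4^n) * S t n 1) ^ 2 := by
    unfold En; rw [S_add, mul_comm, one_mul]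
  rw [e]
  refine this.trans (le_of_eq ?_)
  rw [show En t n = nrm (S t n 1) ^ 2 from rfl]; ring

lemma sum_w (m : ℕ) : ∑ _q ∈ D m ×ˢ D m, (1/4:ℝ)^m = 1 := by
  rw [Finset.sum_const, Finset.card_product, D_card, nsmul_eq_mul, ← pow_add]
  push_cast
  rw [← two_mul, pow_mul, ← mul_pow]; norm_num

lemma nrm_mul_S (t : ℝ) (m : ℕ) (c : ℝ) (μ : R) : nrm (μ * S t m c) ≤ nrm μ := by
  rw [S_expand]
  refine (nrm_mix _ _ _ μ (fun _ _ => by positivity)).trans ?_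
  rw [sum_w, one_mul]

lemma En_le_one (t : ℝ) (n : ℕ) : En t n ≤ 1 := by
  have := nrm_mul_S t n 1 1
  rw [one_mul, nrm_one] at this
  unfold En
  have := nrm_nonneg (S t n 1)
  nlinarith

lemma Lam_nonneg (x : ℝ) : 0 ≤ Lam x := le_max_left _ _

lemma En_ge (t : ℝ) (n : ℕ) : (1/4 : ℝ)^n ≤ En t n := by
  unfold En
  rw [nrm_sq, S_expand, map_sum, sum_inner]
  have hterm : ∀ q ∈ D n ×ˢ D n, (1/4:ℝ)^n * (1/4:ℝ)^n ≤
      inner ℝ (J ((1/4:ℝ)^n • δ (1 * (q.1 + t * q.2))))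
        (∑ q ∈ D n ×ˢ D n, J ((1/4:ℝ)^n • δ (1 * (q.1 + t * q.2)))) := by
    intro q hq
    rw [inner_sum]
    have hh : ∀ q' ∈ D n ×ˢ D n, 0 ≤ inner ℝ (J ((1/4:ℝ)^n • δ (1 * (q.1 + t * q.2))))
        (J ((1/4:ℝ)^n • δ (1 * (q'.1 + t * q'.2)))) := by
      intro q' _
      simp only [map_smul, inner_smul_left, inner_smul_right, conj_trivial, J_δ, inner_e]
      have := Lam_nonneg (1 * (q.1 + t * q.2) - 1 * (q'.1 + t * q'.2))
      positivity
    refine le_trans (le_of_eq ?_) (Finset.single_le_sum hh hq)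
    simp only [map_smul, inner_smul_left, inner_smul_right, conj_trivial, J_δ, inner_e]
    simp [Lam]
  refine le_trans (le_of_eq ?_) (Finset.sum_le_sum hterm)
  rw [← Finset.sum_mul, sum_w, one_mul]

lemma En_pos (t : ℝ) (n : ℕ) : 0 < En t n := lt_of_lt_of_le (by positivity) (En_ge t n)

/-- Fekete exponent -/
lemma fekete (t : ℝ) (h0 : 0 ≤ t) (h1 : t ≤ 1) : ∃ b : ℝ, 0 ≤ b ∧ b ≤ Real.log 4 ∧
    (∀ n : ℕ, Real.exp (-b * n) ≤ 9 * En t n) ∧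
    (∀ κ > 0, ∃ K ≥ (1:ℝ), ∀ n : ℕ, En t n ≤ K * Real.exp (-(b - κ) * n)) := by
  have hu : Subadditive (fun n => Real.log (9 * En t n)) := by
    intro m n
    have a := En_pos t m
    have b := En_pos t n
    have c := En_pos t (m + n)
    simp only
    rw [← Real.log_mul (by positivity) (by positivity)]
    refine Real.log_le_log (by positivity) ?_
    have := En_sub t h0 h1 m n
    linarith
  have hlow : ∀ n : ℕ, -Real.log 4 * n ≤ Real.log (9 * En t n) := by
    intro n
    have : Real.log ((1/4:ℝ)^n) ≤ Real.log (9 * En t n) :=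
      Real.log_le_log (by positivity) (by linarith [En_ge t n, En_pos t n])
    rw [Real.log_pow, one_div, Real.log_inv] at this
    linarith
  have hbdd : BddBelow (Set.range fun n : ℕ => Real.log (9 * En t n) / n) := by
    refine ⟨-Real.log 4, ?_⟩
    rintro _ ⟨n, rfl⟩
    rcases Nat.eq_zero_or_pos n with rfl | hn
    · simp; exact Real.log_nonneg (by norm_num)
    · simp only
      rw [le_div_iff₀ (by positivity)]; exact hlow n
  have hlim := hu.tendsto_lim hbdd
  have hlim0 : hu.lim ≤ 0 := by
    have t2 : Tendsto (fun n : ℕ => Real.log 9 / n) atTop (𝓝 0) :=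
      tendsto_const_div_atTop_nhds_zero_nat _
    refine le_of_tendsto_of_tendsto hlim t2 ?_
    filter_upwards with n
    refine div_le_div_of_nonneg_right ?_ (by positivity)
    exact Real.log_le_log (by linarith [En_pos t n]) (by linarith [En_le_one t n])
  refine ⟨-hu.lim, by linarith, ?_, ?_, ?_⟩
  · have : -Real.log 4 ≤ hu.lim := by
      refine ge_of_tendsto hlim ?_
      filter_upwards [eventually_gt_atTop 0] with n hn
      rw [le_div_iff₀ (by positivity)]; exact hlow n
    linarith
  · intro n
    rcases Nat.eq_zero_or_pos n with rfl | hn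
    · have := En_ge t 0
      simp at this ⊢; linarith
    · have := hu.lim_le_div hbdd hn.ne'
      rw [le_div_iff₀ (by positivity)] at this
      rw [neg_neg, ← Real.le_log_iff_exp_le (by linarith [En_pos t n])]
      exact this
  · intro κ hκ
    have hev : ∀ᶠ n : ℕ in atTop, Real.log (9 * En t n) / n < hu.lim + κ :=
      hlim.eventually_lt_const (by linarith)
    obtain ⟨N, hN⟩ := eventually_atTop.1 hev
    have hb : hu.lim ≤ 0 := hlim0
    refine ⟨Real.exp (-hu.lim * N) , Real.one_le_exp (mul_nonneg (by linarith) (by positivity)), fun n => ?_⟩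
    rw [← Real.exp_add]
    by_cases hn : N + 1 ≤ n
    · have := hN n (by omega)
      have hn0 : (0:ℝ) < n := by exact_mod_cast (by omega : 0 < n)
      rw [div_lt_iff₀ hn0] at this
      have h2 : 9 * En t n < Real.exp ((hu.lim + κ) * n) := by
        rw [← Real.log_lt_iff_lt_exp (by linarith [En_pos t n])]; exact this
      have h3 : Real.exp ((hu.lim + κ) * n) ≤ Real.exp (-hu.lim * N + -(-hu.lim - κ) * n) := by
        rw [Real.exp_le_exp]
        have : 0 ≤ -hu.lim * N := mul_nonneg (by linarith) (by positivity)
        linarith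
      linarith [En_pos t n]
    · refine (En_le_one t n).trans (Real.one_le_exp ?_)
      have : (n:ℝ) ≤ N := by exact_mod_cast (by omega : n ≤ N)
      have h4 : 0 ≤ κ * n := by positivity
      nlinarith
end FC

open Filter Topology

namespace FC
open MeasureTheory Finset

lemma cb (n : ℕ) : (Nat.centralBinom n)^2 * (2*n+1) ≤ 16^n := by
  induction n with
  | zero => simp
  | succ n ih =>
    have h := Nat.succ_mul_centralBinom_succ n
    have : (n+1)^2 * ((Nat.centralBinom (n+1))^2 * (2*(n+1)+1)) ≤ (n+1)^2 * 16^(n+1) := by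
      calc _ = ((n+1) * Nat.centralBinom (n+1))^2 * (2*n+3) := by ring
        _ = 4 * (2*n+1) * (2*n+3) * (Nat.centralBinom n ^ 2 * (2*n+1)) := by rw [h]; ring
        _ ≤ 4 * (2*n+1) * (2*n+3) * 16^n := Nat.mul_le_mul_left _ ih
        _ ≤ 4 * (4 * (n+1)^2) * 16^n := by
          refine Nat.mul_le_mul_right _ ?_
          nlinarith
        _ = _ := by ring
    exact Nat.le_of_mul_le_mul_left this (by positivity)

lemma LO1 {k : ℕ} (d : Fin k → ℝ) {W : ℝ} (hW : 0 < W) (hd : ∀ j, W ≤ d j) (x : ℝ) :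
    (Finset.univ.filter fun A : Finset (Fin k) =>
      x ≤ ∑ j ∈ A, d j ∧ ∑ j ∈ A, d j < x + W).card ≤ k.choose (k/2) := by
  have := IsAntichain.sperner (α := Fin k) (𝒜 := (Finset.univ.filter fun A : Finset (Fin k) =>
      x ≤ ∑ j ∈ A, d j ∧ ∑ j ∈ A, d j < x + W)) (by
    intro A hA B hB hne hsub
    simp only [coe_filter, mem_univ, true_and, Set.mem_ofPred_eq] at hA hB
    have hss : A ⊂ B := lt_of_le_of_ne hsub hne
    obtain ⟨j, hjB, hjA⟩ := Finset.exists_of_ssubset hss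
    have : ∑ i ∈ insert j A, d i ≤ ∑ i ∈ B, d i := by
      refine Finset.sum_le_sum_of_subset_of_nonneg ?_ fun i _ _ => by linarith [hd i]
      intro i hi
      rcases Finset.mem_insert.1 hi with rfl | hi
      · exact hjB
      · exact hsub hi
    rw [Finset.sum_insert hjA] at this
    linarith [hd j])
  simpa using this

lemma LO6 {k : ℕ} (d : Fin k → ℝ) {W : ℝ} (hW : 0 < W) (hd : ∀ j, W ≤ d j) (x : ℝ) :
    (Finset.univ.filter fun A : Finset (Fin k) =>
      |x - ∑ j ∈ A, d j| < 3 * W).card ≤ 6 * k.choose (k/2) := by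
  classical
  calc _ ≤ ((range 6).biUnion fun i => Finset.univ.filter fun A : Finset (Fin k) =>
      x - 3*W + i * W ≤ ∑ j ∈ A, d j ∧ ∑ j ∈ A, d j < x - 3*W + i*W + W).card := by
        refine Finset.card_le_card fun A hA => ?_
        simp only [mem_filter, mem_univ, true_and, mem_biUnion, mem_range] at hA ⊢
        rw [abs_lt] at hA
        set y := ∑ j ∈ A, d j
        have h0 : 0 ≤ (y - (x - 3*W)) / W := div_nonneg (by linarith) hW.le
        refine ⟨⌊(y - (x - 3*W)) / W⌋₊, ?_, ?_, ?_⟩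
        · rw [Nat.floor_lt h0, div_lt_iff₀ hW]; push_cast; linarith
        · have := Nat.floor_le h0
          rw [le_div_iff₀ hW] at this; linarith
        · have := Nat.lt_floor_add_one ((y - (x - 3*W)) / W)
          rw [div_lt_iff₀ hW] at this; linarith
    _ ≤ ∑ i ∈ range 6, _ := Finset.card_biUnion_le
    _ ≤ ∑ i ∈ range 6, k.choose (k/2) := Finset.sum_le_sum fun i _ => LO1 d hW hd _
    _ = _ := by simp

lemma choose_bd {h : ℕ} (hh : 1 ≤ h) :
    (((4^h).choose (4^h/2) : ℕ) : ℝ) * (1/2)^(4^h) ≤ (1/2)^h := by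
  obtain ⟨m, rfl⟩ : ∃ m, h = m + 1 := ⟨h - 1, by omega⟩
  set n := 2 * 4^m with hn
  have hk : 4^(m+1) = 2*n := by rw [hn]; ring
  rw [hk, show 2*n/2 = n by omega]
  have h1 := cb n
  rw [Nat.centralBinom] at h1
  set c := (2*n).choose n
  have h2 : (c:ℝ)^2 * (2*n+1) ≤ 16^n := by exact_mod_cast h1
  have h3 : (2*n : ℝ) = 4^(m+1) := by exact_mod_cast hk.symm
  have h4 : ((c:ℝ) * (1/2)^(2*n))^2 ≤ ((1/2)^(m+1))^2 := by
    have e1 : ((c:ℝ) * (1/2)^(2*n))^2 = c^2 / 16^n := by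
      rw [mul_pow, ← pow_mul, show 2*n*2 = 4*n by ring, pow_mul, show ((1:ℝ)/2)^4 = 1/16 by norm_num,
        one_div, inv_pow, div_eq_mul_inv]
    have e2 : (((1:ℝ)/2)^(m+1))^2 = 1 / 4^(m+1) := by
      rw [← pow_mul, mul_comm, pow_mul, show ((1:ℝ)/2)^2 = 1/4 by norm_num, one_div, inv_pow, one_div]
    rw [e1, e2, div_le_div_iff₀ (by positivity) (by positivity), ← h3]
    nlinarith [sq_nonneg (c:ℝ)]
  exact (pow_le_pow_iff_left₀ (by positivity) (by positivity) two_ne_zero).1 h4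

lemma varsum {ι : Type*} [DecidableEq ι] (s : Finset ι) (d : ι → ℝ) :
    ∑ A ∈ s.powerset, (∑ j ∈ A, d j - (∑ j ∈ s, d j)/2)^2 = 2^(s.card) / 4 * ∑ j ∈ s, (d j)^2 := by
  induction s using Finset.induction_on with
  | empty => simp
  | insert i s hi ih =>
    rw [Finset.sum_powerset_insert hi, Finset.card_insert_of_notMem hi, Finset.sum_insert hi,
      Finset.sum_insert hi, ← Finset.sum_add_distrib]
    have : ∀ A ∈ s.powerset, (∑ j ∈ A, d j - (d i + ∑ j ∈ s, d j)/2)^2 +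
        (∑ j ∈ insert i A, d j - (d i + ∑ j ∈ s, d j)/2)^2 =
        2 * (∑ j ∈ A, d j - (∑ j ∈ s, d j)/2)^2 + (d i)^2/2 := by
      intro A hA
      rw [Finset.sum_insert (fun h => hi (Finset.mem_powerset.1 hA h))]
      ring
    rw [Finset.sum_congr rfl this, Finset.sum_add_distrib, ← Finset.mul_sum, ih, Finset.sum_const,
      Finset.card_powerset, nsmul_eq_mul]
    push_cast; ring

lemma local_est (t : ℝ) (h0 : 0 ≤ t) (h1 : t ≤ 1) (β K : ℝ) (hK : 1 ≤ K)
    (hE : ∀ n : ℕ, En t n ≤ K * Real.exp (-β * n)) (L l h h' r : ℕ) (hh : 1 ≤ h)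
    (hr : 2 * h' = h + 2 * r) (hL : l + h' ≤ L)
    (hexp : Real.exp (β * h') * (1/2)^h ≤ (1/4)^r)
    (k : ℕ) (hk : k = 4^h) (d : Fin k → ℝ) (hd1 : ∀ j, (4:ℝ)^l ≤ d j) (hd2 : ∀ j, d j ≤ 8 * 4^l) :
    nrm (S t L 1 * ∑ A ∈ (univ : Finset (Finset (Fin k))), (1/2:ℝ)^k • δ (∑ j ∈ A, d j)) ^ 2
      ≤ 10000 * K^2 * Real.exp (-β * L) * (1/4)^r := by
  classical
  set V : Finset (Fin k) → ℝ := fun A => ∑ j ∈ A, d j with hV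
  set mean := (∑ j, d j) / 2 with hmean
  set R' : ℝ := 4^(l+h')/2 with hR
  set P : Finset (Fin k) → Prop := fun A => |V A - mean| < R' with hP
  set Vin : R := ∑ A ∈ univ.filter P, (1/2:ℝ)^k • δ (V A) with hVin
  set Vout : R := ∑ A ∈ univ.filter (fun A => ¬ P A), (1/2:ℝ)^k • δ (V A) with hVout
  have hsplit : ∑ A : Finset (Fin k), (1/2:ℝ)^k • δ (V A) = Vin + Vout :=
    (Finset.sum_filter_add_sum_filter_not _ _ _).symm
  have hRpos : 0 < R' := by positivity
  -- outer part
  have hPout : ∑ A ∈ univ.filter (fun A => ¬ P A), (1/2:ℝ)^k ≤ 64 * (1/16)^r := by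
    have hv := varsum (univ : Finset (Fin k)) d
    have hub : ∑ j, (d j)^2 ≤ k * (64 * (4^l)^2) := by
      calc ∑ j, (d j)^2 ≤ ∑ j : Fin k, 64 * ((4:ℝ)^l)^2 := by
            refine Finset.sum_le_sum fun j _ => ?_
            have := hd1 j
            have := hd2 j
            have : (0:ℝ) ≤ 4^l := by positivity
            nlinarith
        _ = _ := by simp
    have hlow : (univ.filter (fun A => ¬ P A)).card * R'^2 ≤
        ∑ A ∈ (univ : Finset (Fin k)).powerset, (V A - mean)^2 := by
      rw [← nsmul_eq_mul, ← Finset.sum_const, Finset.powerset_univ]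
      refine (Finset.sum_le_sum (fun A hA => ?_)).trans
        (Finset.sum_le_sum_of_subset_of_nonneg (Finset.filter_subset _ _) fun _ _ _ => sq_nonneg _)
      simp only [hP, not_lt, mem_filter, mem_univ, true_and] at hA
      rw [← sq_abs (V A - mean)]
      exact pow_le_pow_left₀ hRpos.le hA 2
    have hv' : ∑ A ∈ (univ : Finset (Fin k)).powerset, (V A - mean)^2 = 2^k/4 * ∑ j, (d j)^2 := by
      simpa using hv
    rw [hv'] at hlow
    rw [Finset.sum_const, nsmul_eq_mul]
    set c : ℝ := ((univ.filter (fun A => ¬ P A)).card : ℝ)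
    have h5 : c * R'^2 ≤ 2^k/4 * (k * (64 * (4^l)^2)) :=
      hlow.trans (mul_le_mul_of_nonneg_left hub (by positivity))
    have h6 : (64 * (1/16)^r : ℝ) * R'^2 = 16 * (k * (4^l)^2) := by
      rw [hR, hk]
      push_cast
      have e1 : (4:ℝ)^(l+h') ^ 1 = 4^l * 4^h' := by rw [pow_one, pow_add]
      have e2 : ((4:ℝ)^h')^2 = 4^h * 16^r := by
        rw [← pow_mul, mul_comm, hr, pow_add, pow_mul]; norm_num
      have e3 : ((1:ℝ)/16)^r * 16^r = 1 := by rw [← mul_pow]; norm_num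
      rw [pow_one] at e1
      rw [e1]
      calc (64 * (1/16)^r : ℝ) * (4^l * 4^h'/2)^2 = 16 * (4^l)^2 * ((1/16)^r * (4^h')^2) := by ring
        _ = 16 * (4^l)^2 * (4^h * (((1:ℝ)/16)^r * 16^r)) := by rw [e2]; ring
        _ = _ := by rw [e3]; ring
    have h7 : c * (1/2)^k * R'^2 ≤ 64 * (1/16)^r * R'^2 := by
      rw [h6]
      have e4 : ((1:ℝ)/2)^k * 2^k = 1 := by rw [← mul_pow]; norm_num
      calc (c * (1/2)^k * R'^2 : ℝ) = (1/2)^k * (c * R'^2) := by ring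
        _ ≤ (1/2)^k * (2^k/4 * (k * (64 * (4^l)^2))) := mul_le_mul_of_nonneg_left h5 (by positivity)
        _ = ((1/2)^k * 2^k) * (16 * (k * (4^l)^2)) := by ring
        _ = _ := by rw [e4, one_mul]
    exact le_of_mul_le_mul_right h7 (by positivity)
  have hout : nrm (S t L 1 * Vout) ≤ 64 * (1/16)^r * nrm (S t L 1) := by
    refine (nrm_mix _ _ _ _ (fun _ _ => by positivity)).trans ?_
    exact mul_le_mul_of_nonneg_right hPout (nrm_nonneg _)
  have hout2 : nrm (S t L 1 * Vout) ^ 2 ≤ 4096 * (1/4)^r * (K * Real.exp (-β * L)) := by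
    calc nrm (S t L 1 * Vout) ^ 2 ≤ (64 * (1/16)^r * nrm (S t L 1))^2 :=
          pow_le_pow_left₀ (nrm_nonneg _) hout 2
      _ = 4096 * ((1/16)^r)^2 * En t L := by unfold En; ring
      _ ≤ 4096 * (1/4)^r * (K * Real.exp (-β * L)) := by
          refine mul_le_mul (mul_le_mul_of_nonneg_left ?_ (by norm_num)) (hE L) (En_pos t L).le
            (by positivity)
          rw [← pow_mul, mul_comm, pow_mul]
          exact pow_le_pow_left₀ (by norm_num) (by norm_num) _
  -- inner part
  have hWl : (1:ℝ) ≤ 4^l := one_le_pow₀ (by norm_num)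
  have hin1 : nrm (S t (l+h') 1 * Vin) ^ 2 ≤ En t l * (6 * (1/2)^h) := by
    have hc := C1 ((D h' ×ˢ D h') ×ˢ univ.filter P) (fun _ => (1/4:ℝ)^h' * (1/2)^k)
      (fun i => 4^l * (i.1.1 + t * i.1.2) + V i.2) (fun _ => S t l 1) (fun _ _ => by positivity)
      (W := 4^l) (B := nrm (S t l 1)) hWl
      (fun _ _ => supp_mono (Set.Icc_subset_Icc le_rfl (by linarith))
        (S_supp t h0 h1 l 1 (by norm_num))) (fun _ _ => le_rfl)
    have e1 : ∑ i ∈ (D h' ×ˢ D h') ×ˢ univ.filter P, ((1/4:ℝ)^h' * (1/2)^k) •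
        (δ (4^l * (i.1.1 + t * i.1.2) + V i.2) * S t l 1) = S t (l+h') 1 * Vin := by
      rw [S_add, one_mul, S_expand t h', hVin, mul_assoc, Finset.sum_mul_sum, Finset.mul_sum,
        Finset.sum_product]
      refine Finset.sum_congr rfl fun q _ => ?_
      rw [Finset.mul_sum]
      refine Finset.sum_congr rfl fun A _ => ?_
      rw [smul_mul_smul_comm, δ_mul, mul_smul_comm, mul_comm (S t l 1)]
    rw [e1] at hc
    refine hc.trans (mul_le_mul_of_nonneg_left ?_ (sq_nonneg _))
    unfold coll
    have inner_b : ∀ i ∈ (D h' ×ˢ D h') ×ˢ univ.filter P,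
        ∑ j ∈ (D h' ×ˢ D h') ×ˢ univ.filter P,
          (if |4^l * (i.1.1 + t * i.1.2) + V i.2 - (4^l * (j.1.1 + t * j.1.2) + V j.2)| < 3 * 4^l
          then ((1/4:ℝ)^h' * (1/2)^k) * ((1/4:ℝ)^h' * (1/2)^k) else 0)
        ≤ ((1/4:ℝ)^h' * (1/2)^k) * (6 * (1/2)^h) := by
      intro i _
      set x := 4^l * (i.1.1 + t * i.1.2) + V i.2
      rw [Finset.sum_product]
      calc _ ≤ ∑ q ∈ D h' ×ˢ D h', (1/4:ℝ)^h' * (((1/4:ℝ)^h' * (1/2)^k) * (6 * (1/2)^h)) := by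
            refine Finset.sum_le_sum fun q _ => ?_
            set x' := x - 4^l * (q.1 + t * q.2)
            have hLO := LO6 d (W := 4^l) (by positivity) hd1 x'
            calc _ ≤ ∑ A : Finset (Fin k), (if |x' - ∑ j ∈ A, d j| < 3 * 4^l
                  then ((1/4:ℝ)^h' * (1/2)^k) * ((1/4:ℝ)^h' * (1/2)^k) else 0) := by
                  refine (Finset.sum_le_sum fun A _ => le_of_eq ?_).trans
                    (Finset.sum_le_sum_of_subset_of_nonneg (Finset.filter_subset _ _)
                    fun A _ _ => ?_)
                  · simp only [x', hV, sub_sub]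
                  · split_ifs <;> positivity
              _ = (univ.filter fun A : Finset (Fin k) => |x' - ∑ j ∈ A, d j| < 3 * 4^l).card *
                  (((1/4:ℝ)^h' * (1/2)^k) * ((1/4:ℝ)^h' * (1/2)^k)) := by
                  rw [← Finset.sum_filter, Finset.sum_const, nsmul_eq_mul]
              _ ≤ ((6 * k.choose (k/2) : ℕ) : ℝ) *
                  (((1/4:ℝ)^h' * (1/2)^k) * ((1/4:ℝ)^h' * (1/2)^k)) :=
                  mul_le_mul_of_nonneg_right (by exact_mod_cast hLO) (by positivity)
              _ = (1/4:ℝ)^h' * (((1/4:ℝ)^h' * (1/2)^k) * (6 * ((k.choose (k/2) : ℕ) * (1/2)^k))) := by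
                  push_cast; ring
              _ ≤ _ := by
                  have := choose_bd hh
                  rw [← hk] at this
                  gcongr
        _ = _ := by rw [← Finset.sum_mul, sum_w, one_mul]
    refine (Finset.sum_le_sum inner_b).trans ?_
    rw [← Finset.sum_mul]
    have : ∑ i ∈ (D h' ×ˢ D h') ×ˢ univ.filter P, ((1/4:ℝ)^h' * (1/2)^k) ≤ 1 := by
      rw [Finset.sum_product]
      refine le_trans ?_ (sum_w h').le
      refine Finset.sum_le_sum fun q _ => ?_
      rw [Finset.sum_const, nsmul_eq_mul]
      have hcard : ((univ.filter P).card : ℝ) ≤ 2^k := by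
        have := Finset.card_filter_le (univ : Finset (Finset (Fin k))) P
        simp at this
        exact_mod_cast this
      have e4 : ((1:ℝ)/2)^k * 2^k = 1 := by rw [← mul_pow]; norm_num
      calc ((univ.filter P).card : ℝ) * ((1/4:ℝ)^h' * (1/2)^k)
          ≤ 2^k * ((1/4:ℝ)^h' * (1/2)^k) := mul_le_mul_of_nonneg_right hcard (by positivity)
        _ = (1/4:ℝ)^h' * ((1/2)^k * 2^k) := by ring
        _ = _ := by rw [e4, mul_one]
    exact mul_le_of_le_one_left (by positivity) this
  have hin2 : nrm (S t L 1 * Vin) ^ 2 ≤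
      9 * En t (L - (l+h')) * nrm (S t (l+h') 1 * Vin) ^ 2 := by
    have hpos : (1:ℝ) ≤ 4^(l+h') := one_le_pow₀ (by norm_num)
    have hVs : Vin ∈ supp (Set.Icc (mean - R') (mean + R')) := by
      refine Submodule.sum_mem _ fun A hA => Submodule.smul_mem _ _ (δ_mem ?_)
      simp only [mem_filter, mem_univ, true_and, hP] at hA
      rw [abs_lt] at hA
      constructor <;> linarith
    have := split t (L - (l+h')) hpos (mean - R') (S t (l+h') 1 * Vin)
      (supp_mono (Set.Icc_subset_Icc (by linarith) (by rw [hR]; linarith))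
        (supp_mul (S_supp t h0 h1 (l+h') 1 (by norm_num)) hVs))
    have e : S t L 1 = S t (L - (l+h')) (4^(l+h')) * S t (l+h') 1 := by
      conv_lhs => rw [show L = (l+h') + (L - (l+h')) by omega]
      rw [S_add, one_mul, mul_comm]
    rw [e, mul_assoc]; exact this
  have hin3 : nrm (S t L 1 * Vin) ^ 2 ≤ 54 * K^2 * Real.exp (-β * L) * (1/4)^r := by
    calc _ ≤ 9 * En t (L - (l+h')) * (En t l * (6 * (1/2)^h)) := by
          refine hin2.trans (mul_le_mul_of_nonneg_left hin1 ?_)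
          have := En_pos t (L - (l+h')); positivity
      _ ≤ 9 * (K * Real.exp (-β * ((L - (l+h') : ℕ) : ℝ))) *
            ((K * Real.exp (-β * l)) * (6 * (1/2)^h)) := by
          have a1 := hE (L - (l+h'))
          have a2 := hE l
          have := En_pos t (L - (l+h'))
          have := En_pos t l
          gcongr
      _ = 54 * K^2 * (Real.exp (-β * ((L - (l+h') : ℕ) : ℝ)) * Real.exp (-β * l)) * (1/2)^h := by ring
      _ = 54 * K^2 * Real.exp (-β * L) * (Real.exp (β * h') * (1/2)^h) := by
          rw [← Real.exp_add, mul_assoc, mul_assoc (54 * K^2) (Real.exp _), ← mul_assoc (Real.exp _)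
            (Real.exp _), ← Real.exp_add]
          congr 3
          rw [Nat.cast_sub hL]; push_cast; ring
      _ ≤ _ := by gcongr
  have hfin : nrm (S t L 1 * (Vin + Vout)) ≤ nrm (S t L 1 * Vin) + nrm (S t L 1 * Vout) := by
    rw [mul_add]; exact nrm_add _ _
  rw [hsplit]
  set x := nrm (S t L 1 * Vin)
  set y := nrm (S t L 1 * Vout)
  have hz : nrm (S t L 1 * (Vin + Vout)) ^ 2 ≤ 2 * x^2 + 2 * y^2 := by
    have := pow_le_pow_left₀ (nrm_nonneg _) hfin 2
    nlinarith [sq_nonneg (x - y)]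
  refine hz.trans ?_
  have hp : 0 ≤ Real.exp (-β * L) * (1/4)^r := by positivity
  have hKK : K * (Real.exp (-β * L) * (1/4)^r) ≤ K^2 * (Real.exp (-β * L) * (1/4)^r) :=
    mul_le_mul_of_nonneg_right (by nlinarith) hp
  have hKp : 0 ≤ K^2 * (Real.exp (-β * L) * (1/4)^r) := by positivity
  nlinarith
end FC

open Filter Topology

namespace FC
open MeasureTheory Finset

noncomputable def unif (X : Finset ℝ) : R := (X.card : ℝ)⁻¹ • ∑ x ∈ X, δ x

noncomputable def wid (L h M : ℕ) : ℝ := 4^(L*M) / 4^h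

def Nice (L h : ℕ) : List (Option ℕ) → Finset ℝ → ℝ → Prop
  | [], X, y => (∃ x, X = {x}) ∧ ∀ x ∈ X, x ∈ Set.Icc y (y + wid L h 0)
  | none :: σ, X, y => (∃ y', Nice L h σ X y') ∧
      ∀ x ∈ X, x ∈ Set.Icc y (y + wid L h (σ.length + 1))
  | some r :: σ, X, y => (∃ X0 X1 y0 y1, Disjoint X0 X1 ∧ X = X0 ∪ X1 ∧ Nice L h σ X0 y0 ∧
      Nice L h σ X1 y1 ∧ 2^r * 4^(L*σ.length) ≤ y1 - y0 ∧ y1 - y0 ≤ 2^(r+1) * 4^(L*σ.length) ∧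
      r + 2 * h ≤ 2 * L) ∧
      ∀ x ∈ X, x ∈ Set.Icc y (y + wid L h (σ.length + 1))

def cnt : List (Option ℕ) → ℕ
  | [] => 0
  | none :: σ => cnt σ
  | some _ :: σ => cnt σ + 1

lemma Nice.sub {L h : ℕ} {σ : List (Option ℕ)} {X : Finset ℝ} {y : ℝ} (H : Nice L h σ X y) :
    ∀ x ∈ X, x ∈ Set.Icc y (y + wid L h σ.length) := by
  match σ, H with
  | [], H => exact H.2
  | none :: σ, H => exact H.2
  | some r :: σ, H => exact H.2

lemma Nice.card {L h : ℕ} {σ : List (Option ℕ)} {X : Finset ℝ} {y : ℝ} (H : Nice L h σ X y) :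
    X.card = 2 ^ cnt σ := by
  induction σ generalizing X y with
  | nil => obtain ⟨⟨x, rfl⟩, _⟩ := H; simp [cnt]
  | cons o σ ih =>
    cases o with
    | none => obtain ⟨⟨y', H⟩, _⟩ := H; exact ih H
    | some r =>
      obtain ⟨⟨X0, X1, y0, y1, hd, rfl, H0, H1, _⟩, _⟩ := H
      rw [Finset.card_union_of_disjoint hd, ih H0, ih H1, cnt]; ring

lemma unif_supp {X : Finset ℝ} {a b : ℝ} (h : ∀ x ∈ X, x ∈ Set.Icc a b) :
    unif X ∈ supp (Set.Icc a b) :=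
  Submodule.smul_mem _ _ (Submodule.sum_mem _ fun x hx => δ_mem (h x hx))

lemma unif_union {X0 X1 : Finset ℝ} (hd : Disjoint X0 X1) (hc : X0.card = X1.card) :
    unif (X0 ∪ X1) = (1/2 : ℝ) • (unif X1 + unif X0) := by
  unfold unif
  rw [Finset.sum_union hd, Finset.card_union_of_disjoint hd, hc, ← smul_add, smul_smul, add_comm (∑ x ∈ X0, δ x)]
  congr 1
  push_cast
  rw [← two_mul, mul_inv]; norm_num

lemma prod_unif_supp {L h : ℕ} (t : ℝ) (h0 : 0 ≤ t) (h1 : t ≤ 1) (σ : List (Option ℕ)) (k : ℕ)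
    (hk : k = 4^h) (X : Fin k → Finset ℝ) (y : Fin k → ℝ)
    (hN : ∀ j, Nice L h σ (X j) (y j)) :
    S t (L * σ.length) 1 * ∏ j, unif (X j) ∈
      supp (Set.Icc (∑ j, y j) (∑ j, y j + 2 * 4^(L*σ.length))) := by
  have hp := supp_prod univ (fun j => unif (X j)) y (fun j => y j + wid L h σ.length)
    (fun j _ => unif_supp (hN j).sub)
  have hs := S_supp t h0 h1 (L*σ.length) 1 (by norm_num)
  refine supp_mono (Set.Icc_subset_Icc ?_ ?_) (supp_mul hs hp)
  · simp
  · rw [Finset.sum_add_distrib]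
    have : ∑ _j : Fin k, wid L h σ.length = 4^(L*σ.length) := by
      simp only [Finset.sum_const, Finset.card_univ, Fintype.card_fin, nsmul_eq_mul, hk, wid]
      push_cast
      field_simp
    rw [this]; linarith

lemma recursion (t : ℝ) (h0 : 0 ≤ t) (h1 : t ≤ 1) (β K : ℝ) (hK : 1 ≤ K)
    (hE : ∀ n : ℕ, En t n ≤ K * Real.exp (-β * n)) (L h h' r : ℕ) (hh : 1 ≤ h)
    (hr : 2 * h' = h + 2 * r) (hhh : h' ≤ h)
    (hexp : Real.exp (β * h') * (1/2)^h ≤ (1/4)^r) (k : ℕ) (hk : k = 4^h)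
    (σ : List (Option ℕ)) (X : Fin k → Finset ℝ) (y : Fin k → ℝ)
    (hN : ∀ j, Nice L h σ (X j) (y j)) :
    nrm (S t (L * σ.length) 1 * ∏ j, unif (X j)) ^ 2 ≤
      (90000 * K^2 * Real.exp (-β * L)) ^ σ.length * (1/4)^(r * cnt σ) := by
  classical
  induction σ generalizing X y with
  | nil =>
    have : ∀ j, ∃ x, X j = {x} := fun j => (hN j).1
    choose x hx using this
    have e : ∀ s : Finset (Fin k), nrm (∏ j ∈ s, unif (X j)) = 1 := by
      intro s
      induction s using Finset.induction_on with
      | empty => simp [nrm_one]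
      | insert i s hi ih =>
        rw [Finset.prod_insert hi, hx]
        simp only [unif, card_singleton, Nat.cast_one, inv_one, sum_singleton, one_smul]
        rw [nrm_shift]; exact ih
    simp [S_zero, cnt, e]
  | cons o σ ih =>
    have hpow : S t (L * (σ.length + 1)) 1 = S t L (4^(L*σ.length)) * S t (L*σ.length) 1 := by
      rw [mul_add, mul_one, S_add, one_mul, mul_comm]
    have hU : (1:ℝ) ≤ 4^(L*σ.length) := one_le_pow₀ (by norm_num)
    rw [List.length_cons, hpow, mul_assoc, pow_succ]
    set F := 90000 * K^2 * Real.exp (-β * L) with hF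
    have hFpos : 0 < F := by positivity
    cases o with
    | none =>
      have : ∀ j, ∃ y', Nice L h σ (X j) y' := fun j => (hN j).1
      choose y' hy' using this
      have IH := ih X y' hy'
      refine (split t L hU _ _ (prod_unif_supp t h0 h1 σ k hk X y' hy')).trans ?_
      have hEL : 9 * En t L ≤ F := by
        have a1 := hE L
        have a2 : K * Real.exp (-β * L) ≤ K^2 * Real.exp (-β * L) :=
          mul_le_mul_of_nonneg_right (by nlinarith) (by positivity)
        have : 0 < K^2 * Real.exp (-β * L) := by positivity
        rw [hF]; linarith
      calc _ ≤ F * (F ^ σ.length * (1/4)^(r * cnt σ)) :=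
            mul_le_mul hEL IH (sq_nonneg _) hFpos.le
        _ = _ := by rw [cnt]; ring
    | some r' =>
      have : ∀ j, ∃ X0 X1 y0 y1, Disjoint X0 X1 ∧ X j = X0 ∪ X1 ∧ Nice L h σ X0 y0 ∧
        Nice L h σ X1 y1 ∧ 2^r' * 4^(L*σ.length) ≤ y1 - y0 ∧ y1 - y0 ≤ 2^(r'+1) * 4^(L*σ.length) ∧
        r' + 2 * h ≤ 2 * L := fun j => (hN j).1
      choose X0 X1 y0 y1 hdis hX hN0 hN1 hd1 hd2 hr' using this
      have hkpos : 0 < k := by rw [hk]; positivity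
      have hr'' : r' + 2 * h ≤ 2 * L := hr' ⟨0, hkpos⟩
      set U : ℝ := 4^(L*σ.length) with hUdef
      have hU0 : U ≠ 0 := by positivity
      set XA : Finset (Fin k) → Fin k → Finset ℝ := fun A => A.piecewise X1 X0 with hXA
      set yA : Finset (Fin k) → Fin k → ℝ := fun A => A.piecewise y1 y0 with hyA
      have hNA : ∀ A j, Nice L h σ (XA A j) (yA A j) := by
        intro A j
        simp only [hXA, hyA]
        by_cases hj : j ∈ A
        · rw [Finset.piecewise_eq_of_mem _ _ _ hj, Finset.piecewise_eq_of_mem _ _ _ hj]; exact hN1 j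
        · rw [Finset.piecewise_eq_of_notMem _ _ _ hj, Finset.piecewise_eq_of_notMem _ _ _ hj]
          exact hN0 j
      have hprod : ∏ j, unif (X j) = ∑ A : Finset (Fin k), (1/2:ℝ)^k • ∏ j, unif (XA A j) := by
        have e1 : ∀ j, unif (X j) = (1/2:ℝ) • (unif (X1 j) + unif (X0 j)) := by
          intro j
          rw [hX j, unif_union (hdis j) (by rw [(hN0 j).card, (hN1 j).card])]
        simp_rw [e1, Algebra.smul_def, Finset.prod_mul_distrib, Finset.prod_const, Finset.prod_add,
          Finset.mul_sum]
        rw [Finset.powerset_univ]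
        refine Finset.sum_congr rfl fun A _ => ?_
        rw [map_pow, Finset.card_univ, Fintype.card_fin]
        congr 1
        have : ∀ j, unif (XA A j) = A.piecewise (fun j => unif (X1 j)) (fun j => unif (X0 j)) j := by
          intro j
          simp only [hXA]
          by_cases hj : j ∈ A
          · rw [Finset.piecewise_eq_of_mem _ _ _ hj, Finset.piecewise_eq_of_mem _ _ _ hj]
          · rw [Finset.piecewise_eq_of_notMem _ _ _ hj, Finset.piecewise_eq_of_notMem _ _ _ hj]
        simp_rw [this]
        rw [Finset.prod_piecewise, Finset.univ_inter]
      have hyAsum : ∀ A, ∑ j, yA A j = ∑ j, y0 j + ∑ j ∈ A, (y1 j - y0 j) := by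
        intro A
        have : ∀ j, yA A j = y0 j + if j ∈ A then y1 j - y0 j else 0 := by
          intro j
          simp only [hyA]
          by_cases hj : j ∈ A
          · rw [Finset.piecewise_eq_of_mem _ _ _ hj, if_pos hj]; ring
          · rw [Finset.piecewise_eq_of_notMem _ _ _ hj, if_neg hj]; ring
        simp_rw [this]
        rw [Finset.sum_add_distrib]
        congr 1
        rw [Finset.sum_ite_mem, Finset.univ_inter]
      set B := Real.sqrt (F ^ σ.length * (1/4)^(r * cnt σ)) with hB
      have hB2 : B^2 = F ^ σ.length * (1/4)^(r * cnt σ) := Real.sq_sqrt (by positivity)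
      have hc := C12 ((D L ×ˢ D L) ×ˢ (univ : Finset (Finset (Fin k))))
        (fun _ => (1/4:ℝ)^L * (1/2)^k) (fun i => U * (i.1.1 + t * i.1.2) + ∑ j, yA i.2 j)
        (fun i => δ (-∑ j, yA i.2 j) * (S t (L*σ.length) 1 * ∏ j, unif (XA i.2 j)))
        (fun _ _ => by positivity) (W := U) (B := B) hU
        (fun i _ => supp_shift _ (prod_unif_supp t h0 h1 σ k hk _ _ (hNA i.2)) (by ring) (by ring))
        (fun i _ => by
          rw [nrm_shift]
          exact Real.le_sqrt_of_sq_le (ih _ _ (hNA i.2)))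
      have e1 : ∑ i ∈ (D L ×ˢ D L) ×ˢ (univ : Finset (Finset (Fin k))), ((1/4:ℝ)^L * (1/2)^k) •
          (δ (U * (i.1.1 + t * i.1.2) + ∑ j, yA i.2 j) *
          (δ (-∑ j, yA i.2 j) * (S t (L*σ.length) 1 * ∏ j, unif (XA i.2 j)))) =
          S t L U * (S t (L*σ.length) 1 * ∏ j, unif (X j)) := by
        rw [hprod, S_expand t L, Finset.mul_sum, Finset.sum_mul_sum, Finset.sum_product]
        refine Finset.sum_congr rfl fun q _ => Finset.sum_congr rfl fun A _ => ?_
        rw [mul_smul_comm, smul_mul_smul_comm, ← mul_assoc (δ _) (δ _), δ_mul, add_neg_cancel_right]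
      have e2 : ∑ i ∈ (D L ×ˢ D L) ×ˢ (univ : Finset (Finset (Fin k))), ((1/4:ℝ)^L * (1/2)^k) •
          δ ((U * (i.1.1 + t * i.1.2) + ∑ j, yA i.2 j) / U) =
          δ ((∑ j, y0 j)/U) * (S t L 1 * ∑ A ∈ (univ : Finset (Finset (Fin k))),
            (1/2:ℝ)^k • δ (∑ j ∈ A, (y1 j - y0 j) / U)) := by
        rw [S_expand t L, Finset.sum_mul_sum, Finset.sum_product, Finset.mul_sum]
        refine Finset.sum_congr rfl fun q _ => ?_
        rw [Finset.mul_sum]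
        refine Finset.sum_congr rfl fun A _ => ?_
        rw [smul_mul_smul_comm, mul_smul_comm, δ_mul, δ_mul, hyAsum, ← Finset.sum_div]
        congr 2
        field_simp
        ring
      rw [e1, e2, nrm_shift, hB2] at hc
      have hl1 : (4:ℝ)^(r'/2) ≤ 2^r' := by
        rw [show (4:ℝ) = 2^2 by norm_num, ← pow_mul]
        exact pow_le_pow_right₀ (by norm_num) (by omega)
      have hl2 : (2:ℝ)^(r'+1) ≤ 8 * 4^(r'/2) := by
        rw [show (4:ℝ) = 2^2 by norm_num, ← pow_mul, show (8:ℝ) = 2^3 by norm_num, ← pow_add]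
        exact pow_le_pow_right₀ (by norm_num) (by omega)
      have hloc := local_est t h0 h1 β K hK hE L (r'/2) h h' r hh hr (by omega) hexp k hk
        (fun j => (y1 j - y0 j)/U)
        (fun j => by rw [le_div_iff₀ (by positivity)]
                     exact (mul_le_mul_of_nonneg_right hl1 (by positivity)).trans (hd1 j))
        (fun j => by rw [div_le_iff₀ (by positivity)]
                     exact (hd2 j).trans (mul_le_mul_of_nonneg_right hl2 (by positivity)))
      refine hc.trans ?_
      calc _ ≤ F ^ σ.length * (1/4)^(r * cnt σ) *
            (9 * (10000 * K^2 * Real.exp (-β * L) * (1/4)^r)) := by gcongr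
        _ = _ := by rw [hF, cnt]; ring
end FC

open Filter Topology

namespace FC
open MeasureTheory Finset

def wt (L h : ℕ) : List (Option ℕ) → ℕ
  | [] => 1
  | none :: σ => 4^h * wt L h σ
  | some _ :: σ => 4^L * wt L h σ

def pats (L : ℕ) : ℕ → Finset (List (Option ℕ))
  | 0 => {[]}
  | M+1 => ((insertNone (range (2*L+1))) ×ˢ pats L M).image fun p => p.1 :: p.2

lemma pats_card (L M : ℕ) : (pats L M).card ≤ (2*L+2)^M := by
  induction M with
  | zero => simp [pats]
  | succ M ih =>
    rw [pats]
    refine card_image_le.trans ?_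
    rw [card_product, card_insertNone, card_range, pow_succ, mul_comm]
    exact Nat.mul_le_mul_right _ ih

lemma pats_len (L M : ℕ) : ∀ σ ∈ pats L M, σ.length = M := by
  induction M with
  | zero => simp [pats]
  | succ M ih =>
    intro σ hσ
    simp only [pats, mem_image, mem_product] at hσ
    obtain ⟨p, ⟨_, hp⟩, rfl⟩ := hσ
    simp [ih _ hp]

lemma sum_pats (L M : ℕ) (f : List (Option ℕ) → ℕ) :
    ∑ σ ∈ pats L (M+1), f σ =
      ∑ σ ∈ pats L M, (f (none :: σ) + ∑ r ∈ range (2*L+1), f (some r :: σ)) := by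
  rw [pats, sum_image (by
    rintro ⟨a, b⟩ _ ⟨c, d⟩ _ h
    simpa using h), sum_product, Finset.sum_comm]
  refine sum_congr rfl fun σ _ => ?_
  simp

lemma wid_succ (L h M : ℕ) : wid L h (M+1) = 4^L * wid L h M := by
  unfold wid; rw [mul_add, mul_one, pow_add]; ring

lemma wid_pos (L h M : ℕ) : 0 < wid L h M := by unfold wid; positivity

def Ach (L h : ℕ) (σ : List (Option ℕ)) (X : Finset ℝ) (y : ℝ) : Prop :=
  ∃ X' ⊆ X, Nice L h σ X' y

open Classical in
lemma count (L h M : ℕ) (X : Finset ℝ) (y : ℝ)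
    (hsep : ∀ x ∈ X, ∀ x' ∈ X, x ≠ x' → 1 ≤ |x - x'|)
    (hX : ∀ x ∈ X, x ∈ Set.Ico y (y + wid L h M)) :
    X.card ≤ ∑ σ ∈ pats L M, if Ach L h σ X y then wt L h σ else 0 := by
  induction M generalizing X y with
  | zero =>
    have hw : wid L h 0 ≤ 1 := by
      unfold wid
      rw [mul_zero, pow_zero]
      exact div_le_one_of_le₀ (one_le_pow₀ (by norm_num)) (by positivity)
    have h1 : X.card ≤ 1 := by
      rw [card_le_one]
      intro a ha b hb
      by_contra hne
      have h1 := hsep a ha b hb hne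
      have h2 := hX a ha
      have h3 := hX b hb
      have : |a - b| < 1 := by
        rw [abs_lt]; constructor <;> linarith [h2.1, h2.2, h3.1, h3.2]
      linarith
    rcases X.eq_empty_or_nonempty with rfl | ⟨x, hx⟩
    · simp
    · simp only [pats, sum_singleton, wt]
      rw [if_pos]
      · exact h1
      · refine ⟨{x}, by simpa using hx, ⟨x, rfl⟩, ?_⟩
        intro z hz
        rw [mem_singleton] at hz; subst hz
        exact Set.Ico_subset_Icc_self (hX _ hx)
  | succ M ih =>
    set w := wid L h M with hw
    have hwpos : 0 < w := wid_pos L h M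
    have hww : wid L h (M+1) = 4^L * w := wid_succ L h M
    set cell : ℕ → Finset ℝ := fun c => X.filter fun x => x ∈ Set.Ico (y + c*w) (y + c*w + w)
      with hcell
    have hcsub : ∀ c, cell c ⊆ X := fun c => filter_subset _ _
    have hcover : X ⊆ (range (4^L)).biUnion cell := by
      intro x hx
      have h2 := hX x hx
      rw [hww] at h2
      have hnn : 0 ≤ (x - y)/w := div_nonneg (by linarith [h2.1]) hwpos.le
      rw [mem_biUnion]
      refine ⟨⌊(x-y)/w⌋₊, ?_, ?_⟩
      · rw [mem_range, Nat.floor_lt hnn, div_lt_iff₀ hwpos]; push_cast; linarith [h2.2]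
      · simp only [hcell, mem_filter]
        have a1 := Nat.floor_le hnn
        have a2 := Nat.lt_floor_add_one ((x-y)/w)
        rw [le_div_iff₀ hwpos] at a1
        rw [div_lt_iff₀ hwpos] at a2
        exact ⟨hx, by linarith, by linarith⟩
    have hc1 : X.card ≤ ∑ c ∈ range (4^L), (cell c).card :=
      (card_le_card hcover).trans card_biUnion_le
    have hc2 : ∑ c ∈ range (4^L), (cell c).card ≤ ∑ c ∈ range (4^L), ∑ σ ∈ pats L M,
        if Ach L h σ (cell c) (y + c*w) then wt L h σ else 0 := by
      refine sum_le_sum fun c _ => ih _ _ ?_ ?_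
      · intro x hx x' hx' hne
        exact hsep x (hcsub c hx) x' (hcsub c hx') hne
      · intro x hx
        exact (mem_filter.1 hx).2
    refine hc1.trans (hc2.trans ?_)
    rw [Finset.sum_comm, sum_pats]
    refine sum_le_sum fun σ hσ => ?_
    have hlen : σ.length = M := pats_len L M σ hσ
    set N := (range (4^L)).filter fun c => Ach L h σ (cell c) (y + c*w) with hN
    have e1 : ∑ c ∈ range (4^L), (if Ach L h σ (cell c) (y + c*w) then wt L h σ else 0) =
        N.card * wt L h σ := by
      rw [← sum_filter, sum_const, smul_eq_mul]
    rw [e1]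
    rcases N.eq_empty_or_nonempty with hNe | hNe
    · simp [hNe]
    have hNcard : N.card ≤ 4^L := by
      simpa using card_filter_le (range (4^L)) (fun c => Ach L h σ (cell c) (y + c*w))
    have hXIcc : ∀ x ∈ X, x ∈ Set.Icc y (y + wid L h (σ.length+1)) := by
      intro x hx; rw [hlen]; exact Set.Ico_subset_Icc_self (hX x hx)
    by_cases hbig : N.card ≤ 4^h
    · have hach : Ach L h (none :: σ) X y := by
        obtain ⟨c, hc⟩ := hNe
        obtain ⟨X', hX', hn⟩ := (mem_filter.1 hc).2
        exact ⟨X', hX'.trans (hcsub c), ⟨_, hn⟩, fun x hx => hXIcc x (hcsub c (hX' hx))⟩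
      rw [if_pos hach, wt]
      exact (Nat.mul_le_mul_right _ hbig).trans (Nat.le_add_right _ _)
    · push Not at hbig
      set c0 := N.min' hNe with hc0
      set c1 := N.max' hNe with hc1
      have hm0 : c0 ∈ N := min'_mem _ _
      have hm1 : c1 ∈ N := max'_mem _ _
      have hdiff : 4^h ≤ c1 - c0 := by
        have : N ⊆ Icc c0 c1 := fun c hc => mem_Icc.2 ⟨min'_le _ _ hc, le_max' _ _ hc⟩
        have := card_le_card this
        rw [Nat.card_Icc] at this
        omega
      have h4 : 0 < 4^h := by positivity
      have hlt1 : c1 < 4^L := mem_range.1 (mem_filter.1 hm1).1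
      set v := (c1 - c0) / 4^h with hv
      have hv1 : 1 ≤ v := (Nat.one_le_div_iff h4).2 hdiff
      set r := Nat.log 2 v with hr
      have hr1 : 2^r ≤ v := Nat.pow_log_le_self 2 (by omega)
      have hr2 : v < 2^(r+1) := Nat.lt_pow_succ_log_self (by norm_num) v
      have hA : 2^r * 4^h ≤ c1 - c0 := by
        calc 2^r * 4^h ≤ v * 4^h := Nat.mul_le_mul_right _ hr1
          _ ≤ _ := Nat.div_mul_le_self _ _
      have hB : c1 - c0 ≤ 2^(r+1) * 4^h := by
        have : c1 - c0 < (v + 1) * 4^h := by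
          have := Nat.lt_div_mul_add h4 (a := c1 - c0)
          rw [← hv] at this; linarith
        exact this.le.trans (Nat.mul_le_mul_right _ hr2)
      have hrL : r + 2 * h ≤ 2 * L := by
        have : 2^(r+2*h) < 2^(2*L) := by
          rw [pow_add, pow_mul, pow_mul]
          norm_num
          omega
        exact ((Nat.pow_lt_pow_iff_right (by norm_num)).1 this).le
      have hU : (4:ℝ)^(L*σ.length) = 4^h * w := by
        rw [hlen, hw, wid]; field_simp
      have hcc : ((c1 - c0 : ℕ) : ℝ) = c1 - c0 := Nat.cast_sub (by omega)
      have hach : Ach L h (some r :: σ) X y := by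
        obtain ⟨X0, hX0, hn0⟩ := (mem_filter.1 hm0).2
        obtain ⟨X1, hX1, hn1⟩ := (mem_filter.1 hm1).2
        refine ⟨X0 ∪ X1, union_subset (hX0.trans (hcsub _)) (hX1.trans (hcsub _)),
          ⟨X0, X1, _, _, ?_, rfl, hn0, hn1, ?_, ?_, hrL⟩, ?_⟩
        · rw [disjoint_left]
          intro x hx0 hx1
          have a0 := (mem_filter.1 (hX0 hx0)).2
          have a1 := (mem_filter.1 (hX1 hx1)).2
          have : (c0:ℝ) + 1 ≤ c1 := by exact_mod_cast (by omega : c0 + 1 ≤ c1)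
          nlinarith [a0.2, a1.1]
        · have : (2^r * 4^h : ℝ) ≤ c1 - c0 := by rw [← hcc]; exact_mod_cast hA
          rw [hU]
          nlinarith
        · have : (c1 - c0 : ℝ) ≤ 2^(r+1) * 4^h := by rw [← hcc]; exact_mod_cast hB
          rw [hU]
          nlinarith
        · intro x hx
          rcases mem_union.1 hx with hx | hx
          · exact hXIcc x (hcsub _ (hX0 hx))
          · exact hXIcc x (hcsub _ (hX1 hx))
      have hrr : r ∈ range (2*L+1) := by rw [mem_range]; omega
      calc N.card * wt L h σ ≤ 4^L * wt L h σ := Nat.mul_le_mul_right _ hNcard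
        _ = (if Ach L h (some r :: σ) X y then wt L h (some r :: σ) else 0) := by
            rw [if_pos hach, wt]
        _ ≤ ∑ r ∈ range (2*L+1), (if Ach L h (some r :: σ) X y then wt L h (some r :: σ) else 0) :=
            single_le_sum (f := fun r => if Ach L h (some r :: σ) X y then wt L h (some r :: σ) else 0)
              (fun _ _ => Nat.zero_le _) hrr
        _ ≤ _ := Nat.le_add_left _ _

lemma wt_le (L h : ℕ) (σ : List (Option ℕ)) : wt L h σ ≤ 4^(h * σ.length + L * cnt σ) := by
  induction σ with
  | nil => simp [wt, cnt]
  | cons o σ ih =>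
    cases o with
    | none =>
      simp only [wt, cnt, List.length_cons]
      calc 4^h * wt L h σ ≤ 4^h * 4^(h * σ.length + L * cnt σ) := Nat.mul_le_mul_left _ ih
        _ = _ := by rw [← pow_add]; congr 1; ring
    | some r =>
      simp only [wt, cnt, List.length_cons]
      calc 4^L * wt L h σ ≤ 4^L * 4^(h * σ.length + L * cnt σ) := Nat.mul_le_mul_left _ ih
        _ = 4^(h * σ.length + L * (cnt σ + 1)) := by rw [← pow_add]; congr 1; ring
        _ ≤ _ := Nat.pow_le_pow_right (by norm_num) (by
          have : h * σ.length ≤ h * (σ.length + 1) := Nat.mul_le_mul_left _ (by omega)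
          omega)

lemma exists_nice (L h M : ℕ) (X : Finset ℝ) (y : ℝ) (hne : X.Nonempty)
    (hsep : ∀ x ∈ X, ∀ x' ∈ X, x ≠ x' → 1 ≤ |x - x'|)
    (hX : ∀ x ∈ X, x ∈ Set.Ico y (y + wid L h M)) :
    ∃ σ : List (Option ℕ), σ.length = M ∧ Ach L h σ X y ∧
      X.card ≤ (2*L+2)^M * 4^(h * M + L * cnt σ) := by
  classical
  by_contra hcon
  push Not at hcon
  have hc := count L h M X y hsep hX
  have hpos : 0 < X.card := card_pos.2 hne
  have hp : 0 < (2*L+2)^M := by positivity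
  have : (2*L+2)^M * X.card < (2*L+2)^M * X.card := by
    calc (2*L+2)^M * X.card ≤ (2*L+2)^M * ∑ σ ∈ pats L M, if Ach L h σ X y then wt L h σ else 0 :=
          Nat.mul_le_mul_left _ hc
      _ = ∑ σ ∈ pats L M, (2*L+2)^M * (if Ach L h σ X y then wt L h σ else 0) := mul_sum _ _ _
      _ < ∑ σ ∈ pats L M, X.card := by
          refine sum_lt_sum_of_nonempty ?_ fun σ hσ => ?_
          · rw [nonempty_iff_ne_empty]
            intro he
            rw [he, sum_empty] at hc; omega
          · split_ifs with ha
            · refine lt_of_le_of_lt (Nat.mul_le_mul_left _ ?_) (hcon σ (pats_len L M σ hσ) ha)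
              have := wt_le L h σ
              rwa [pats_len L M σ hσ] at this
            · simpa using hpos
      _ = (pats L M).card * X.card := by simp
      _ ≤ _ := Nat.mul_le_mul_right _ (pats_card L M)
  exact lt_irrefl _ this
end FC

open Filter Topology

namespace FC
open MeasureTheory Finset

lemma greedy (L h M : ℕ) (A : R) (T g : ℝ) (hT : 0 < T) (hg : 0 ≤ g) (y : ℝ) (m : ℕ) :
    ∀ X : Finset ℝ, X.card = m →
    (∀ x ∈ X, ∀ x' ∈ X, x ≠ x' → 1 ≤ |x - x'|) →
    (∀ x ∈ X, x ∈ Set.Ico y (y + wid L h M)) →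
    (∀ X' ⊆ X, ∀ σ : List (Option ℕ), σ.length = M → Nice L h σ X' y →
      T ≤ (2*L+2)^M * 4^(h * M + L * cnt σ) → nrm (A * unif X') ≤ g) →
    nrm (A * ∑ x ∈ X, δ x) ≤ X.card * g + T * nrm A := by
  classical
  induction m using Nat.strong_induction_on with
  | _ m ih =>
    intro X hm hsep hX hgood
    have nA := nrm_nonneg A
    by_cases hlt : (X.card : ℝ) < T
    · have := nrm_mix X (fun _ => (1:ℝ)) (fun x => x) A (fun _ _ => zero_le_one)
      simp only [one_smul, sum_const, nsmul_eq_mul, mul_one] at this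
      have h2 : (X.card : ℝ) * nrm A ≤ T * nrm A := mul_le_mul_of_nonneg_right hlt.le nA
      have h3 : 0 ≤ (X.card : ℝ) * g := by positivity
      linarith
    · push Not at hlt
      have hne : X.Nonempty := by
        rw [← card_pos]
        have : (0:ℝ) < X.card := lt_of_lt_of_le hT hlt
        exact_mod_cast this
      obtain ⟨σ, hlen, ⟨X', hX', hn⟩, hc⟩ := exists_nice L h M X y hne hsep hX
      have hc' : (X.card : ℝ) ≤ (2*L+2)^M * 4^(h * M + L * cnt σ) := by exact_mod_cast hc
      have hg' := hgood X' hX' σ hlen hn (hlt.trans hc')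
      have hcard' : 0 < X'.card := by rw [hn.card]; positivity
      have hsd : (X \ X').card = X.card - X'.card := card_sdiff_of_subset hX'
      have hle := card_le_card hX'
      have h1 := ih (X \ X').card (by omega) (X \ X') rfl
        (fun x hx x' hx' => hsep x (sdiff_subset hx) x' (sdiff_subset hx'))
        (fun x hx => hX x (sdiff_subset hx))
        (fun Y hY => hgood Y (hY.trans sdiff_subset))
      have e1 : ∑ x ∈ X, δ x = ∑ x ∈ X \ X', δ x + (X'.card : ℝ) • unif X' := by
        rw [← sum_sdiff hX', unif, smul_smul, mul_inv_cancel₀ (by positivity), one_smul]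
      have h2 : nrm (A * ∑ x ∈ X, δ x) ≤ nrm (A * ∑ x ∈ X \ X', δ x) + X'.card * nrm (A * unif X') := by
        rw [e1, mul_add, mul_smul_comm, ← nrm_smul _ (by positivity)]
        exact nrm_add _ _
      have h3 : (X'.card : ℝ) * nrm (A * unif X') ≤ X'.card * g :=
        mul_le_mul_of_nonneg_left hg' (by positivity)
      have h4 : ((X \ X').card : ℝ) = X.card - X'.card := by rw [hsd, Nat.cast_sub hle]
      rw [h4] at h1
      linarith

set_option maxHeartbeats 1000000 in
lemma flatten (t : ℝ) (h0 : 0 ≤ t) (h1 : t ≤ 1) (b : ℝ) (hb0 : 0 ≤ b) (hb : b < Real.log 4)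
    (hup : ∀ κ > 0, ∃ K ≥ (1:ℝ), ∀ n : ℕ, En t n ≤ K * Real.exp (-(b - κ) * n))
    (ε : ℝ) (hε : 0 < ε) :
    ∃ L h : ℕ, ∃ κ0 > (0:ℝ), 1 ≤ L ∧ ∀ κ > 0, κ ≤ κ0 → ∀ K ≥ (1:ℝ),
      (∀ n : ℕ, En t n ≤ K * Real.exp (-(b - κ) * n)) →
      ∀ (M : ℕ) (X : Finset ℝ) (y : ℝ),
      (∀ x ∈ X, ∀ x' ∈ X, x ≠ x' → 1 ≤ |x - x'|) →
      (∀ x ∈ X, x ∈ Set.Ico y (y + wid L h M)) →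
      nrm (S t (L*M) 1 * ∑ x ∈ X, δ x) ≤
        X.card * (Real.sqrt K * Real.exp (-(b + κ) * (L*M) / 2)) +
        Real.exp (ε * (L*M)) * (Real.sqrt K * Real.exp (-(b - κ) * (L*M) / 2)) := by
  have hlog4 : 0 < Real.log 4 := Real.log_pos (by norm_num)
  set δ0 := Real.log 4 - b with hδ0
  have hδ0pos : 0 < δ0 := by linarith
  obtain ⟨J0, hJ0⟩ := exists_nat_ge (2 * Real.log 4 / δ0)
  set Jn := J0 + 1
  have hJ : 2 * Real.log 4 ≤ Jn * δ0 := by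
    rw [div_le_iff₀ hδ0pos] at hJ0
    simp only [Jn]; push_cast; linarith
  obtain ⟨Q0, hQ0⟩ := exists_nat_ge (8 * Jn * Real.log 4 / ε)
  set Q := Q0 + 1
  have hQ : 8 * Jn * Real.log 4 ≤ ε * Q := by
    rw [div_le_iff₀ hε] at hQ0
    simp only [Q]; push_cast; linarith
  have hQpos : (0:ℝ) < Q := by positivity
  set κ1 := ε / (8 * Q) with hκ1
  have hκ1pos : 0 < κ1 := by positivity
  obtain ⟨K1, hK1, hE1⟩ := hup κ1 hκ1pos
  -- choose r large
  have ev : ∀ᶠ r : ℕ in atTop, 1 ≤ r ∧ Real.log (2 * ((Q * r : ℕ) : ℝ) + 2) ≤ ε * ((Q*r : ℕ) : ℝ) / 4 ∧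
      Real.log (90000 * K1^2) ≤ ((Q*r : ℕ) : ℝ) * κ1 := by
    have tn : Tendsto (fun r : ℕ => ((Q*r : ℕ) : ℝ)) atTop atTop := by
      refine tendsto_natCast_atTop_atTop.comp ?_
      exact tendsto_id.const_mul_atTop' (by positivity)
    have t1 : ∀ᶠ x : ℝ in atTop, Real.log (2 * x + 2) ≤ ε * x / 4 := by
      have := (Real.isLittleO_log_id_atTop.bound (c := ε/16) (by positivity))
      have tt : Tendsto (fun x : ℝ => 2 * x + 2) atTop atTop :=
        tendsto_atTop_add_const_right _ _ (tendsto_id.const_mul_atTop (by norm_num))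
      have h3 := tt.eventually this
      filter_upwards [h3, eventually_ge_atTop 1] with x hx hx1
      simp only [id, Real.norm_eq_abs] at hx
      rw [abs_of_nonneg (a := 2*x+2) (by linarith)] at hx
      have := le_abs_self (Real.log (2*x+2))
      nlinarith
    have t2 : ∀ᶠ x : ℝ in atTop, Real.log (90000 * K1^2) ≤ x * κ1 :=
      (tendsto_id.atTop_mul_const hκ1pos).eventually_ge_atTop _
    filter_upwards [eventually_ge_atTop 1, tn.eventually t1, tn.eventually t2] with r a1 a2 a3
    exact ⟨a1, a2, a3⟩
  obtain ⟨r, hr1, hr2, hr3⟩ := ev.exists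
  set L := Q * r with hL
  set h := 2 * Jn * r with hh
  set h' := Jn * r + r with hh'
  set k := 4^h with hk
  have hLpos : 1 ≤ L := Nat.mul_pos (by omega) hr1
  have hJr : 1 ≤ Jn * r := Nat.mul_pos (by omega) hr1
  have hJr2 : r ≤ Jn * r := Nat.le_mul_of_pos_left _ (by omega)
  set β := b - κ1 with hβ
  have hexp : Real.exp (β * h') * (1/2)^h ≤ (1/4)^r := by
    have e1 : ((1:ℝ)/2)^h = Real.exp (-(Jn * r * Real.log 4)) := by
      rw [hh, mul_assoc, pow_mul, Real.exp_neg, show ((1:ℝ)/2)^2 = 4⁻¹ by norm_num, inv_pow]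
      congr 1
      rw [mul_comm _ (Real.log 4), Real.exp_mul, Real.exp_log (by norm_num)]
      rw [← Nat.cast_mul, Real.rpow_natCast]
    have e2 : ((1:ℝ)/4)^r = Real.exp (-(r * Real.log 4)) := by
      rw [Real.exp_neg, one_div, inv_pow]
      congr 1
      rw [mul_comm _ (Real.log 4), Real.exp_mul, Real.exp_log (by norm_num), Real.rpow_natCast]
    rw [e1, e2, ← Real.exp_add, Real.exp_le_exp]
    have hh'c : (h' : ℝ) = Jn * r + r := by rw [hh']; push_cast; ring
    have hle : β * h' ≤ b * h' := mul_le_mul_of_nonneg_right (by linarith) (by positivity)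
    rw [hh'c] at hle ⊢
    have hbb : b = Real.log 4 - δ0 := by rw [hδ0]; ring
    have hrr : (0:ℝ) ≤ r := by positivity
    have h5 := mul_le_mul_of_nonneg_right hJ hrr
    have h6 : 0 ≤ δ0 * r := by positivity
    rw [hbb] at hle
    nlinarith
  set η := ε / (4 * Q) with hη
  have hηpos : 0 < η := by positivity
  have hkpos : (0:ℝ) < k := by rw [hk]; positivity
  refine ⟨L, h, η / (2 * k), by positivity, hLpos, ?_⟩
  intro κ hκ hκ0 K hK hE M X y hsep hX
  set N : ℝ := (L:ℝ) * M with hN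
  have hN0 : 0 ≤ N := by positivity
  have hSn : nrm (S t (L*M) 1) ≤ Real.sqrt K * Real.exp (-(b - κ) * N / 2) := by
    have e1 : Real.sqrt K * Real.exp (-(b - κ) * N / 2) =
        Real.sqrt (K * Real.exp (-(b - κ) * N)) := by
      rw [Real.sqrt_mul (by linarith), Real.exp_half]
    rw [e1]
    refine Real.le_sqrt_of_sq_le ?_
    have := hE (L*M)
    rw [En] at this
    push_cast at this
    exact this
  set g := Real.sqrt K * Real.exp (-(b + κ) * N / 2) with hg
  have hmain := greedy L h M (S t (L*M) 1) (Real.exp (ε * N)) g (Real.exp_pos _) (by positivity) y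
    _ X rfl hsep hX ?_
  · refine hmain.trans ?_
    have := mul_le_mul_of_nonneg_left hSn (Real.exp_pos (ε * N)).le
    linarith
  · intro X' _ σ hlen hn hT
    have hrec := recursion t h0 h1 β K1 hK1 (by simpa [hβ] using hE1) L h h' r
      (by rw [hh, mul_assoc]; omega) (by rw [hh, hh', mul_assoc]; ring) (by rw [hh, hh', mul_assoc]; omega) hexp k hk σ
      (fun _ => X') (fun _ => y) (fun _ => hn)
    rw [prod_const, card_univ, Fintype.card_fin, hlen] at hrec
    -- bound by exp
    have hs : ε * M / 2 ≤ cnt σ * Real.log 4 := by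
      have hlog := Real.log_le_log (Real.exp_pos _) hT
      rw [Real.log_exp, Real.log_mul (by positivity) (by positivity), Real.log_pow, Real.log_pow] at hlog
      push_cast at hlog
      have hLr : (L:ℝ) = Q * r := by rw [hL]; push_cast; ring
      have hhr : (h:ℝ) = 2 * Jn * r := by rw [hh]; push_cast; ring
      have a1 : (M:ℝ) * Real.log (2*L+2) ≤ M * (ε * L / 4) := mul_le_mul_of_nonneg_left hr2 (by positivity)
      have a2 : (h:ℝ) * Real.log 4 ≤ ε * L / 4 := by
        rw [hhr, hLr]
        have := mul_le_mul_of_nonneg_right hQ (show (0:ℝ) ≤ r by positivity)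
        linarith
      have a3 : (h:ℝ) * Real.log 4 * M ≤ ε * L / 4 * M := mul_le_mul_of_nonneg_right a2 (by positivity)
      have hLp : (0:ℝ) < L := by exact_mod_cast hLpos
      have : (L:ℝ) * (ε * M / 2) ≤ L * (cnt σ * Real.log 4) := by
        rw [hN] at hlog
        linarith
      exact le_of_mul_le_mul_left this hLp
    have hG : (90000 * K1^2 * Real.exp (-β * L)) ^ M * (1/4:ℝ)^(r * cnt σ) ≤
        Real.exp (-(b + η) * N) := by
      have e1 : (90000 * K1^2 : ℝ) = Real.exp (Real.log (90000 * K1^2)) := (Real.exp_log (by positivity)).symm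
      have e2 : ((1:ℝ)/4)^(r * cnt σ) = Real.exp (-(r * cnt σ * Real.log 4)) := by
        rw [Real.exp_neg, one_div, inv_pow]
        congr 1
        rw [mul_comm _ (Real.log 4), Real.exp_mul, Real.exp_log (by norm_num), ← Nat.cast_mul,
          Real.rpow_natCast]
      rw [e2, e1, ← Real.exp_add, ← Real.exp_nat_mul, ← Real.exp_add, Real.exp_le_exp]
      have b1 : (M:ℝ) * Real.log (90000 * K1^2) ≤ M * (L * κ1) :=
        mul_le_mul_of_nonneg_left hr3 (by positivity)
      have b2 : (r:ℝ) * (ε * M / 2) ≤ r * (cnt σ * Real.log 4) :=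
        mul_le_mul_of_nonneg_left hs (by positivity)
      have hLr : (L:ℝ) = Q * r := by rw [hL]; push_cast; ring
      have b3 : (r:ℝ) * (ε * M / 2) = 4 * κ1 * N := by
        rw [hN, hLr, hκ1]; field_simp; ring
      have b4 : η = 2 * κ1 := by rw [hη, hκ1]; field_simp; ring
      rw [b4, hβ]
      rw [hN] at b3 ⊢
      linarith
    set ρ := unif X'
    have hkk : k = (k - 1) + 1 := by have : 0 < k := by exact_mod_cast hkpos
                                     omega
    have hj := jensen (S t (L*M) 1) ρ (k-1)
    rw [← hkk] at hj
    have hGn : nrm (ρ^k * S t (L*M) 1) ≤ Real.exp (-(b + η) * N / 2) := by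
      rw [Real.exp_half]
      refine Real.le_sqrt_of_sq_le ?_
      rw [mul_comm (ρ^k)]
      exact hrec.trans hG
    have hfin : nrm (ρ * S t (L*M) 1) ^ k ≤ g ^ k := by
      refine hj.trans ?_
      calc _ ≤ (Real.sqrt K * Real.exp (-(b - κ) * N / 2))^(k-1) * Real.exp (-(b + η) * N / 2) :=
            mul_le_mul (pow_le_pow_left₀ (nrm_nonneg _) hSn _) hGn (nrm_nonneg _) (by positivity)
        _ = (Real.sqrt K)^(k-1) * Real.exp (((k-1 : ℕ):ℝ) * (-(b - κ) * N / 2) + -(b + η) * N / 2) := by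
            rw [mul_pow, ← Real.exp_nat_mul, mul_assoc, ← Real.exp_add]
        _ ≤ (Real.sqrt K)^k * Real.exp ((k:ℝ) * (-(b + κ) * N / 2)) := by
            refine mul_le_mul ?_ ?_ (Real.exp_pos _).le (by positivity)
            · exact pow_le_pow_right₀ (Real.one_le_sqrt.2 hK) (by omega)
            · rw [Real.exp_le_exp]
              have c1 : ((k-1 : ℕ):ℝ) = k - 1 := by
                rw [Nat.cast_sub (by omega)]; simp
              rw [c1]
              rw [le_div_iff₀ (by positivity)] at hκ0
              have c2 : κ * (2 * k) * N ≤ η * N := mul_le_mul_of_nonneg_right hκ0 hN0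
              have c3 : 0 ≤ κ * N := by positivity
              linarith
        _ = g^k := by rw [hg, mul_pow, ← Real.exp_nat_mul]
    rw [mul_comm]
    exact (pow_le_pow_iff_left₀ (nrm_nonneg _) (by positivity) (by omega)).1 hfin
end FC

open Filter Topology

namespace FC
open MeasureTheory Finset

lemma separation (t : ℝ) (ht : Irrational t) (n0 : ℕ) : ∃ n ≥ n0, ∀ a b : ℤ,
    |(a:ℝ)| ≤ 4^n → |(b:ℝ)| ≤ 4^n → (a ≠ 0 ∨ b ≠ 0) → (1/4:ℝ)^(3*n) ≤ |a + t * b| := by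
  by_contra hcon
  push Not at hcon
  set m := n0 + 2 with hm
  have hcon' : ∀ i : ℕ, ∃ a b : ℤ, |(a:ℝ)| ≤ 4^(m+i) ∧ |(b:ℝ)| ≤ 4^(m+i) ∧ (a ≠ 0 ∨ b ≠ 0) ∧
    |a + t * b| < (1/4:ℝ)^(3*(m+i)) := fun i => hcon (m+i) (by omega)
  choose a b ha hb hab hlt using hcon'
  have hb0 : ∀ i, b i ≠ 0 := by
    intro i h
    have h1 := hlt i
    rw [h] at h1
    simp only [Int.cast_zero, mul_zero, add_zero] at h1
    have h2 : |(a i:ℝ)| < 1 := h1.trans_le (pow_le_one₀ (by norm_num) (by norm_num))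
    have h3 : |a i| < 1 := by exact_mod_cast h2
    have h4 : a i = 0 := Int.abs_lt_one_iff.1 h3
    rcases hab i with h5 | h5
    · exact h5 h4
    · exact h5 h
  have hcross : ∀ i, a i * b (i+1) = a (i+1) * b i := by
    intro i
    have key : |((a i * b (i+1) - a (i+1) * b i : ℤ) : ℝ)| < 1 := by
      have e : ((a i * b (i+1) - a (i+1) * b i : ℤ) : ℝ) =
          (a i + t * b i) * b (i+1) - (a (i+1) + t * b (i+1)) * b i := by push_cast; ring
      rw [e]
      refine (abs_sub _ _).trans_lt ?_
      rw [abs_mul, abs_mul]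
      set x : ℝ := 4^(m+i) with hx
      have hx16 : 16 ≤ x := by
        calc (16:ℝ) = 4^2 := by norm_num
          _ ≤ _ := pow_le_pow_right₀ (by norm_num) (by omega)
      have p1 : (1/4:ℝ)^(3*(m+i)) = 1/x^3 := by
        rw [hx, mul_comm, pow_mul, one_div, inv_pow]; norm_num
      have h1 : |(a i + t * b i : ℝ)| ≤ 1/x^3 := by rw [← p1]; exact (hlt i).le
      have h2 : |(a (i+1) + t * b (i+1) : ℝ)| ≤ 1/x^3 := by
        rw [← p1]
        refine (hlt (i+1)).le.trans ?_
        exact pow_le_pow_of_le_one (by norm_num) (by norm_num) (by omega)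
      have h3 : |(b (i+1) : ℝ)| ≤ 4*x := by
        have := hb (i+1)
        rw [show m + (i+1) = (m+i)+1 by ring, pow_succ] at this
        linarith
      have h4 : |(b i : ℝ)| ≤ x := hb i
      have h5 : |(a i + t * b i : ℝ)| * |(b (i+1) : ℝ)| ≤ 1/x^3 * (4*x) :=
        mul_le_mul h1 h3 (abs_nonneg _) (by positivity)
      have h6 : |(a (i+1) + t * b (i+1) : ℝ)| * |(b i : ℝ)| ≤ 1/x^3 * x :=
        mul_le_mul h2 h4 (abs_nonneg _) (by positivity)
      have h7 : 1/x^3 * (4*x) + 1/x^3 * x < 1 := by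
        have : 1/x^3 * (4*x) + 1/x^3 * x = 5 / x^2 := by field_simp; ring
        rw [this, div_lt_one (by positivity)]
        nlinarith
      linarith
    have h3 : |a i * b (i+1) - a (i+1) * b i| < 1 := by exact_mod_cast key
    have := Int.abs_lt_one_iff.1 h3
    linarith
  have hconst : ∀ i, a i * b 0 = a 0 * b i := by
    intro i
    induction i with
    | zero => rfl
    | succ i ih =>
      have h1 := hcross i
      have : b i * (a (i+1) * b 0) = b i * (a 0 * b (i+1)) := by
        calc b i * (a (i+1) * b 0) = (a (i+1) * b i) * b 0 := by ring
          _ = (a i * b 0) * b (i+1) := by rw [← h1]; ring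
          _ = _ := by rw [ih]; ring
      exact mul_left_cancel₀ (hb0 i) this
  have hne : (a 0 + t * b 0 : ℝ) ≠ 0 := by
    intro h
    have hb00 : (b 0 : ℝ) ≠ 0 := by exact_mod_cast hb0 0
    apply ht
    refine ⟨-(a 0 : ℚ) / (b 0 : ℚ), ?_⟩
    push_cast
    field_simp
    linarith
  have hpos := abs_pos.2 hne
  obtain ⟨j, hj⟩ := exists_pow_lt_of_lt_one (show 0 < |(a 0 + t * b 0 : ℝ)| / |(b 0 : ℝ)| by
    have : (b 0 : ℝ) ≠ 0 := by exact_mod_cast hb0 0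
    positivity) (show (1/4:ℝ) < 1 by norm_num)
  have hb0pos : 0 < |(b 0 : ℝ)| := abs_pos.2 (by exact_mod_cast hb0 0)
  rw [lt_div_iff₀ hb0pos] at hj
  have h1 : |(a j + t * b j : ℝ)| * |(b 0 : ℝ)| = |(a 0 + t * b 0 : ℝ)| * |(b j : ℝ)| := by
    rw [← abs_mul, ← abs_mul]
    congr 1
    have : ((a j : ℝ)) * b 0 = a 0 * b j := by exact_mod_cast hconst j
    linarith
  have h2 : 1 ≤ |(b j : ℝ)| := by
    have : 1 ≤ |b j| := Int.one_le_abs (hb0 j)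
    exact_mod_cast this
  have h3 : |(a j + t * b j : ℝ)| ≤ (1/4)^j :=
    (hlt j).le.trans (pow_le_pow_of_le_one (by norm_num) (by norm_num) (by omega))
  nlinarith

lemma near_count (C : Finset ℕ) (c m : ℕ) :
    (C.filter fun c' : ℕ => |(c:ℝ) - c'| < 3 * (4^m : ℕ)).card ≤ 7 * 4^m := by
  have h4 : 0 < 4^m := by positivity
  calc _ ≤ (Icc (c - 3*4^m) (c + 3 * 4^m)).card := by
        refine card_le_card fun c' hc' => ?_
        rw [mem_filter, abs_lt] at hc'
        rw [mem_Icc]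
        have h1 : (c':ℝ) < c + 3 * (4^m : ℕ) := by linarith [hc'.2.1]
        have h2 : (c:ℝ) < c' + 3 * (4^m : ℕ) := by linarith [hc'.2.2]
        have h1' : c' < c + 3 * 4^m := by exact_mod_cast h1
        have h2' : c < c' + 3 * 4^m := by exact_mod_cast h2
        omega
    _ ≤ _ := by rw [Nat.card_Icc]; omega

set_option maxHeartbeats 1000000 in
lemma top_est (t : ℝ) (h0 : 0 ≤ t) (h1 : t ≤ 1) (n L h M : ℕ)
    (hsep : ∀ q ∈ D n ×ˢ D n, ∀ q' ∈ D n ×ˢ D n, q ≠ q' →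
      1 ≤ |(4:ℝ)^(L*M) * (q.1 + t * q.2) - (4:ℝ)^(L*M) * (q'.1 + t * q'.2)|)
    (T B : ℝ) (hT : 0 < T)
    (hB : ∀ (X : Finset ℝ) (y : ℝ), T ≤ X.card → (∀ x ∈ X, ∀ x' ∈ X, x ≠ x' → 1 ≤ |x - x'|) →
      (∀ x ∈ X, x ∈ Set.Ico y (y + wid L h M)) →
      nrm (S t (L*M) 1 * ∑ x ∈ X, δ x) ≤ X.card * B) :
    En t (n + L*M) ≤ 18 * B^2 * En t n + 14 * En t (L*M) * 4^h * T * (1/4)^n := by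
  classical
  set Q := D n ×ˢ D n with hQ
  set W : ℝ := 4^(L*M) with hW
  have hW1 : 1 ≤ W := one_le_pow₀ (by norm_num)
  have hW0 : 0 < W := by linarith
  have hwd : wid L h M = W / 4^h := rfl
  have hwle : wid L h M ≤ W := by
    rw [hwd]; exact div_le_self hW0.le (one_le_pow₀ (by norm_num))
  set v : ℕ × ℕ → ℝ := fun q => q.1 + t * q.2 with hv
  have hv0 : ∀ q, 0 ≤ v q := fun q => by simp only [hv]; positivity
  set cf : ℕ × ℕ → ℕ := fun q => ⌊(4:ℝ)^h * v q⌋₊ with hcf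
  set C := Q.image cf with hC
  set p : ℕ → ℝ := fun c => W * c / 4^h with hp
  set Xs : ℕ → Finset ℝ := fun c => (Q.filter fun q => cf q = c).image fun q => W * v q with hXs
  set w : ℕ → ℝ := fun c => (1/4:ℝ)^n * (Q.filter fun q => cf q = c).card with hw
  have hinj : ∀ q ∈ Q, ∀ q' ∈ Q, W * v q = W * v q' → q = q' := by
    intro q hq q' hq' he
    by_contra hne
    have := hsep q hq q' hq' hne
    simp only [hv] at he
    rw [he] at this
    norm_num at this
  have hXcard : ∀ c, (Xs c).card = (Q.filter fun q => cf q = c).card := by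
    intro c
    refine card_image_of_injOn ?_
    intro q hq q' hq' he
    exact hinj q (mem_filter.1 hq).1 q' (mem_filter.1 hq').1 he
  have hpq : ∀ q, W * v q ∈ Set.Ico (p (cf q)) (p (cf q) + wid L h M) := by
    intro q
    have hnn : 0 ≤ (4:ℝ)^h * v q := mul_nonneg (by positivity) (hv0 q)
    have a1 := Nat.floor_le hnn
    have a2 := Nat.lt_floor_add_one ((4:ℝ)^h * v q)
    have h4 : (0:ℝ) < 4^h := by positivity
    simp only [hp, hwd]
    constructor
    · rw [div_le_iff₀ h4]
      nlinarith
    · rw [← add_div, lt_div_iff₀ h4]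
      nlinarith
  have hXin : ∀ c, ∀ x ∈ Xs c, x ∈ Set.Ico (p c) (p c + wid L h M) := by
    intro c x hx
    obtain ⟨q, hq, rfl⟩ := mem_image.1 hx
    rw [← (mem_filter.1 hq).2]; exact hpq q
  have hXsep : ∀ c, ∀ x ∈ Xs c, ∀ x' ∈ Xs c, x ≠ x' → 1 ≤ |x - x'| := by
    intro c x hx x' hx' hne
    obtain ⟨q, hq, rfl⟩ := mem_image.1 hx
    obtain ⟨q', hq', rfl⟩ := mem_image.1 hx'
    exact hsep q (mem_filter.1 hq).1 q' (mem_filter.1 hq').1 (fun h => hne (by rw [h]))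
  have hw0 : ∀ c, 0 ≤ w c := fun c => by simp only [hw]; positivity
  have hXpos : ∀ c ∈ C, 0 < (Xs c).card := by
    intro c hc
    obtain ⟨q, hq, rfl⟩ := mem_image.1 hc
    rw [hXcard]
    exact card_pos.2 ⟨q, mem_filter.2 ⟨hq, rfl⟩⟩
  set μ : ℕ → R := fun c => δ (-p c) * (S t (L*M) 1 * unif (Xs c)) with hμ
  have hμsupp : ∀ c, μ c ∈ supp (Set.Icc 0 (2*W)) := by
    intro c
    have h2 := supp_mul (S_supp t h0 h1 (L*M) 1 (by norm_num))
      (unif_supp (fun x hx => Set.Ico_subset_Icc_self (hXin c x hx)))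
    refine supp_mono (Set.Icc_subset_Icc ?_ ?_) (supp_shift (-p c) h2 rfl rfl)
    · linarith
    · linarith
  have hSdec : S t (n + L*M) 1 = ∑ c ∈ C, w c • (δ (p c) * μ c) := by
    rw [add_comm, S_add, one_mul, S_expand t n]
    have : ∑ q ∈ Q, (1/4:ℝ)^n • δ (4^(L*M) * (q.1 + t * q.2)) =
        ∑ c ∈ C, ∑ q ∈ Q.filter (fun q => cf q = c), (1/4:ℝ)^n • δ (W * v q) :=
      (sum_fiberwise_of_maps_to (fun q hq => mem_image_of_mem _ hq) _).symm
    rw [this, Finset.mul_sum]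
    refine sum_congr rfl fun c hc => ?_
    simp only [hμ]
    rw [← mul_assoc (δ _) (δ _), δ_mul, add_neg_cancel, δ_zero, one_mul, unif, ← smul_sum,
      mul_smul_comm, mul_smul_comm, smul_smul]
    have hpos := hXpos c hc
    have e1 : w c * ((Xs c).card : ℝ)⁻¹ = (1/4:ℝ)^n := by
      simp only [hw]
      rw [← hXcard, mul_assoc, mul_inv_cancel₀ (by positivity), mul_one]
    rw [e1]
    congr 2
    simp only [hXs]
    rw [sum_image]
    intro q hq q' hq' he
    exact hinj q (mem_filter.1 hq).1 q' (mem_filter.1 hq').1 he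
  set P : ℕ → Prop := fun c => T ≤ (Xs c).card with hP
  rw [En, hSdec, ← sum_filter_add_sum_filter_not C P]
  have hsubC : C.filter P ⊆ C := filter_subset _ _
  have hsubC' : C.filter (fun c => ¬ P c) ⊆ C := filter_subset _ _
  -- collision comparison
  have hcollC : coll (C.filter P) w p (3*W) ≤ 9 * En t n := by
    have s1 : coll (C.filter P) w p (3*W) ≤ coll C w p (3*W) := by
      have hnn : ∀ i j, 0 ≤ (if |p i - p j| < 3*W then w i * w j else 0) := by
        intro i j
        have := mul_nonneg (hw0 i) (hw0 j)
        split_ifs <;> simp [this]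
      unfold coll
      refine (sum_le_sum fun i _ => sum_le_sum_of_subset_of_nonneg hsubC fun j _ _ => hnn i j).trans ?_
      exact sum_le_sum_of_subset_of_nonneg hsubC fun i _ _ => sum_nonneg fun j _ => hnn i j
    have s2 : coll C w p (3*W) ≤ coll Q (fun _ => (1/4:ℝ)^n) (fun q => W * v q) (4*W) := by
      unfold coll
      rw [← sum_fiberwise_of_maps_to (s := Q) (t := C) (g := cf) (fun q hq => mem_image_of_mem _ hq)]
      refine sum_le_sum fun c _ => ?_
      have e2 : ∀ q, ∑ j ∈ Q, (if |W * v q - W * v j| < 4*W then (1/4:ℝ)^n * (1/4)^n else 0) =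
          ∑ c' ∈ C, ∑ j ∈ Q.filter (fun j => cf j = c'),
            (if |W * v q - W * v j| < 4*W then (1/4:ℝ)^n * (1/4)^n else 0) := fun q =>
        (sum_fiberwise_of_maps_to (fun q hq => mem_image_of_mem _ hq) _).symm
      simp_rw [e2]
      rw [Finset.sum_comm]
      refine sum_le_sum fun c' _ => ?_
      split_ifs with hlt
      · have : w c * w c' = ∑ q ∈ Q.filter (fun q => cf q = c), ∑ j ∈ Q.filter (fun q => cf q = c'),
            (1/4:ℝ)^n * (1/4)^n := by
          simp only [hw, sum_const, nsmul_eq_mul]; ring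
        rw [this]
        refine sum_le_sum fun q hq => sum_le_sum fun j hj => ?_
        rw [if_pos]
        have b1 := hpq q
        have b2 := hpq j
        rw [(mem_filter.1 hq).2] at b1
        rw [(mem_filter.1 hj).2] at b2
        rw [abs_lt] at hlt ⊢
        constructor <;> linarith [b1.1, b1.2, b2.1, b2.2, hlt.1, hlt.2]
      · refine sum_nonneg fun q _ => sum_nonneg fun j _ => ?_
        split_ifs <;> positivity
    have s3 := C2 Q (fun _ => (1/4:ℝ)^n) (fun q => W * v q) (fun _ _ => by positivity) hW0
    have e3 : ∑ q ∈ Q, (1/4:ℝ)^n • δ (W * v q / W) = S t n 1 := by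
      rw [S_expand]
      refine sum_congr rfl fun q _ => ?_
      rw [mul_div_cancel_left₀ _ hW0.ne', one_mul]
    rw [e3] at s3
    exact s1.trans (s2.trans s3)
  have hbig : nrm (∑ c ∈ C.filter P, w c • (δ (p c) * μ c)) ^ 2 ≤ B^2 * (9 * En t n) := by
    refine (C1 (C.filter P) w p μ (fun c _ => hw0 c) hW1 (fun c _ => hμsupp c) (B := B) ?_).trans
      (mul_le_mul_of_nonneg_left hcollC (sq_nonneg _))
    intro c hc
    simp only [hμ]
    have hpos := hXpos c (hsubC hc)
    rw [nrm_shift, unif, mul_smul_comm, nrm_smul _ (by positivity), inv_mul_le_iff₀ (by positivity)]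
    exact hB (Xs c) (p c) (mem_filter.1 hc).2 (hXsep c) (hXin c)
  have hsum1 : ∑ c ∈ C, w c = 1 := by
    rw [← sum_w n, ← sum_fiberwise_of_maps_to (s := Q) (t := C) (g := cf)
      (fun q hq => mem_image_of_mem _ hq)]
    refine sum_congr rfl fun c _ => ?_
    simp only [hw, sum_const, nsmul_eq_mul]; ring
  have hsmall : nrm (∑ c ∈ C.filter (fun c => ¬ P c), w c • (δ (p c) * μ c)) ^ 2 ≤
      En t (L*M) * (7 * 4^h * T * (1/4)^n) := by
    refine (C1 (C.filter (fun c => ¬ P c)) w p μ (fun c _ => hw0 c) hW1 (fun c _ => hμsupp c)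
      (B := nrm (S t (L*M) 1)) ?_).trans (mul_le_mul_of_nonneg_left ?_ (sq_nonneg _))
    · intro c hc
      simp only [hμ]
      have hpos := hXpos c (hsubC' hc)
      rw [nrm_shift, unif, smul_sum]
      refine (nrm_mix _ _ _ _ (fun _ _ => by positivity)).trans ?_
      rw [sum_const, nsmul_eq_mul, mul_inv_cancel₀ (by positivity), one_mul]
    · unfold coll
      have hin : ∀ c ∈ C.filter (fun c => ¬ P c), ∑ c' ∈ C.filter (fun c => ¬ P c),
          (if |p c - p c'| < 3*W then w c * w c' else 0) ≤ w c * (7 * 4^h * T * (1/4)^n) := by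
        intro c _
        have hcnt := near_count (C.filter (fun c => ¬ P c)) c h
        calc _ ≤ ∑ c' ∈ C.filter (fun c => ¬ P c),
              (if |(c:ℝ) - c'| < 3 * (4^h : ℕ) then w c * ((1/4)^n * T) else 0) := by
              refine sum_le_sum fun c' hc' => ?_
              have hiff : |p c - p c'| < 3*W ↔ |(c:ℝ) - c'| < 3 * (4^h : ℕ) := by
                have : p c - p c' = W / 4^h * ((c:ℝ) - c') := by simp only [hp]; ring
                rw [this, abs_mul, abs_of_pos (by positivity), div_mul_eq_mul_div, div_lt_iff₀ (by positivity)]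
                push_cast
                rw [show 3 * W * 4^h = W * (3 * 4^h) by ring]
                exact mul_lt_mul_iff_right₀ hW0
              by_cases hlt : |p c - p c'| < 3*W
              · rw [if_pos hlt, if_pos (hiff.1 hlt)]
                refine mul_le_mul_of_nonneg_left ?_ (hw0 c)
                simp only [hw]
                refine mul_le_mul_of_nonneg_left ?_ (by positivity)
                have := (mem_filter.1 hc').2
                simp only [hP, not_le] at this
                rw [← hXcard]; exact this.le
              · rw [if_neg hlt, if_neg (fun h => hlt (hiff.2 h))]
          _ = ((C.filter (fun c => ¬ P c)).filter
              (fun c' : ℕ => |(c:ℝ) - c'| < 3 * (4^h : ℕ))).card * (w c * ((1/4)^n * T)) := by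
              rw [← sum_filter, sum_const, nsmul_eq_mul]
          _ ≤ ((7 * 4^h : ℕ) : ℝ) * (w c * ((1/4)^n * T)) := by
              refine mul_le_mul_of_nonneg_right (by exact_mod_cast hcnt) ?_
              have := hw0 c
              positivity
          _ = _ := by push_cast; ring
      refine (sum_le_sum hin).trans ?_
      rw [← sum_mul]
      refine mul_le_of_le_one_left (by positivity) ?_
      rw [← hsum1]
      exact sum_le_sum_of_subset_of_nonneg hsubC' fun c _ _ => hw0 c
  have hadd := nrm_add (∑ c ∈ C.filter P, w c • (δ (p c) * μ c))
    (∑ c ∈ C.filter (fun c => ¬ P c), w c • (δ (p c) * μ c))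
  set xx := nrm (∑ c ∈ C.filter P, w c • (δ (p c) * μ c))
  set yy := nrm (∑ c ∈ C.filter (fun c => ¬ P c), w c • (δ (p c) * μ c))
  have hsq := pow_le_pow_left₀ (nrm_nonneg _) hadd 2
  have : (xx + yy)^2 ≤ 2 * xx^2 + 2 * yy^2 := by linarith [sq_nonneg (xx - yy)]
  linarith
end FC

open Filter Topology

namespace FC
open MeasureTheory Finset

lemma sep_D (t : ℝ) (n N : ℕ) (hN : 3 * n ≤ N)
    (hs : ∀ a b : ℤ, |(a:ℝ)| ≤ 4^n → |(b:ℝ)| ≤ 4^n → (a ≠ 0 ∨ b ≠ 0) →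
      (1/4:ℝ)^(3*n) ≤ |a + t*b|) :
    ∀ q ∈ D n ×ˢ D n, ∀ q' ∈ D n ×ˢ D n, q ≠ q' →
      1 ≤ |(4:ℝ)^N*(q.1+t*q.2) - 4^N*(q'.1+t*q'.2)| := by
  intro q hq q' hq' hne
  rw [mem_product] at hq hq'
  have hb : ∀ x ∈ D n, ∀ y ∈ D n, |(((x:ℤ) - (y:ℤ) : ℤ) : ℝ)| ≤ 4^n := by
    intro x hx y hy
    have h1 := D_lt _ hx
    have h2 := D_lt _ hy
    have h3 : |(x:ℤ) - (y:ℤ)| ≤ ((4^n : ℕ) : ℤ) := by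
      rw [abs_le]; constructor <;> omega
    have : ((|(x:ℤ) - (y:ℤ)| : ℤ) : ℝ) ≤ (((4^n : ℕ) : ℤ) : ℝ) := by exact_mod_cast h3
    rw [Int.cast_abs] at this
    simpa using this
  have h := hs ((q.1:ℤ) - q'.1) ((q.2:ℤ) - q'.2) (hb _ hq.1 _ hq'.1) (hb _ hq.2 _ hq'.2) (by
    by_contra hc
    push Not at hc
    apply hne
    ext <;> omega)
  have e : (4:ℝ)^N*(q.1+t*q.2) - 4^N*(q'.1+t*q'.2) =
      4^N * ((((q.1:ℤ) - q'.1 : ℤ) : ℝ) + t * (((q.2:ℤ) - q'.2 : ℤ) : ℝ)) := by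
    push_cast; ring
  rw [e, abs_mul, abs_of_pos (by positivity : (0:ℝ) < 4^N)]
  calc (1:ℝ) = 4^(3*n) * (1/4)^(3*n) := by rw [← mul_pow]; norm_num
    _ ≤ 4^N * _ := mul_le_mul (pow_le_pow_right₀ (by norm_num) hN) h (by positivity) (by positivity)

lemma final_num (b d κ K A : ℝ) (n N : ℝ) (hb : 0 ≤ b) (hd : b + d = Real.log 4) (hd0 : 0 < d)
    (hκ : 0 < κ) (hκd : κ ≤ d/20) (hK : 1 ≤ K) (hA : 0 ≤ A) (hn : 0 ≤ n) (hN : 3*n ≤ N)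
    (hN4 : N ≤ 4*n) (En' EN EnN : ℝ) (hEn0 : 0 ≤ En')
    (h1 : En' ≤ K * Real.exp (-(b-κ)*n)) (h2 : EN ≤ K * Real.exp (-(b-κ)*N))
    (h3 : Real.exp (-b*(n+N)) ≤ 9 * EnN)
    (h4 : EnN ≤ 18 * (√K * Real.exp (-(b+κ)*N/2) +
      Real.exp (-d*n/4) * (√K * Real.exp (-(b-κ)*N/2)))^2 * En' +
      14 * EN * A * Real.exp (d*n/2) * Real.exp (-(b+d)*n)) :
    Real.exp (2*κ*n) ≤ 9 * (72*K^2 + 14*K*A) := by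
  have hB : (√K * Real.exp (-(b+κ)*N/2) +
      Real.exp (-d*n/4) * (√K * Real.exp (-(b-κ)*N/2)))^2 ≤
      2 * K * (Real.exp (-(b+κ)*N) + Real.exp (-d*n/2 - (b-κ)*N)) := by
    have e1 : (√K * Real.exp (-(b+κ)*N/2))^2 = K * Real.exp (-(b+κ)*N) := by
      rw [mul_pow, Real.sq_sqrt (by linarith), ← Real.exp_nat_mul]; congr 2; push_cast; ring
    have e2 : (Real.exp (-d*n/4) * (√K * Real.exp (-(b-κ)*N/2)))^2 =
        K * Real.exp (-d*n/2 - (b-κ)*N) := by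
      rw [mul_pow, mul_pow, Real.sq_sqrt (by linarith), ← Real.exp_nat_mul, ← Real.exp_nat_mul,
        mul_left_comm, ← Real.exp_add]
      congr 2; push_cast; ring
    refine (add_sq_le).trans ?_
    rw [e1, e2]
    exact le_of_eq (by ring)
  have hκn : 0 ≤ κ * n := by positivity
  have hdn : κ * n ≤ d/20*n := mul_le_mul_of_nonneg_right hκd hn
  have hκN : κ * N ≤ κ * (4*n) := mul_le_mul_of_nonneg_left hN4 hκ.le
  have hκN' : κ * (3*n) ≤ κ * N := mul_le_mul_of_nonneg_left hN hκ.le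
  set Z := Real.exp (-b*(n+N) - 2*κ*n) with hZ
  have t1 : Real.exp (-(b+κ)*N) * Real.exp (-(b-κ)*n) ≤ Z := by
    rw [← Real.exp_add, hZ]; apply Real.exp_le_exp.2; nlinarith
  have t2 : Real.exp (-d*n/2 - (b-κ)*N) * Real.exp (-(b-κ)*n) ≤ Z := by
    rw [← Real.exp_add, hZ]; apply Real.exp_le_exp.2; nlinarith
  have t3 : Real.exp (-(b-κ)*N) * Real.exp (d*n/2) * Real.exp (-(b+d)*n) ≤ Z := by
    rw [← Real.exp_add, ← Real.exp_add, hZ]; apply Real.exp_le_exp.2; nlinarith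
  have p1 : 18 * (√K * Real.exp (-(b+κ)*N/2) +
      Real.exp (-d*n/4) * (√K * Real.exp (-(b-κ)*N/2)))^2 * En' ≤ 72*K^2*Z := by
    calc _ ≤ 18 * (2 * K * (Real.exp (-(b+κ)*N) + Real.exp (-d*n/2 - (b-κ)*N))) *
          (K * Real.exp (-(b-κ)*n)) := by gcongr
      _ = 36 * K^2 * (Real.exp (-(b+κ)*N) * Real.exp (-(b-κ)*n) +
          Real.exp (-d*n/2 - (b-κ)*N) * Real.exp (-(b-κ)*n)) := by ring
      _ ≤ 36 * K^2 * (Z + Z) := by gcongr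
      _ = _ := by ring
  have p2 : 14 * EN * A * Real.exp (d*n/2) * Real.exp (-(b+d)*n) ≤ 14*K*A*Z := by
    calc _ ≤ 14 * (K * Real.exp (-(b-κ)*N)) * A * Real.exp (d*n/2) * Real.exp (-(b+d)*n) := by
          gcongr
      _ = 14*K*A*(Real.exp (-(b-κ)*N) * Real.exp (d*n/2) * Real.exp (-(b+d)*n)) := by ring
      _ ≤ _ := by gcongr
  have p3 : Real.exp (-b*(n+N)) ≤ 9 * (72*K^2 + 14*K*A) * Z := by nlinarith
  have p4 : Real.exp (-b*(n+N)) = Real.exp (2*κ*n) * Z := by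
    rw [hZ, ← Real.exp_add]; congr 1; ring
  rw [p4] at p3
  exact le_of_mul_le_mul_right p3 (Real.exp_pos _)

theorem decay (t : ℝ) (h0 : 0 ≤ t) (h1 : t ≤ 1) (ht : Irrational t) :
    ∀ κ > 0, ∃ K ≥ (1:ℝ), ∀ n : ℕ, En t n ≤ K * Real.exp (-(Real.log 4 - κ)*n) := by
  obtain ⟨b, hb0, hb4, hlow, hup⟩ := fekete t h0 h1
  rcases hb4.eq_or_lt with hb | hb
  · rw [← hb]; exact hup
  exfalso
  obtain ⟨d, hd⟩ : ∃ d, b + d = Real.log 4 := ⟨Real.log 4 - b, by ring⟩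
  have hd0 : 0 < d := by linarith
  obtain ⟨L, h, κ0, hκ0, hL, hfl⟩ := flatten t h0 h1 b hb0 hb hup (d/16) (by positivity)
  set κ := min κ0 (d/20) with hκ
  have hκp : 0 < κ := lt_min hκ0 (by positivity)
  obtain ⟨K, hK, hKE⟩ := hup κ hκp
  have hfl := hfl κ hκp (min_le_left _ _) K hK hKE
  obtain ⟨n0, hn0⟩ : ∃ n0 : ℕ, ∀ n : ℕ, n0 ≤ n →
      9 * (72*K^2 + 14*K*4^h) < Real.exp (2*κ*n) := by
    have : Tendsto (fun n : ℕ => Real.exp (2*κ*n)) atTop atTop :=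
      Real.tendsto_exp_atTop.comp
        (tendsto_natCast_atTop_atTop.const_mul_atTop (by positivity))
    exact eventually_atTop.1 (this.eventually_gt_atTop _)
  obtain ⟨n, hn, hs⟩ := separation t ht (n0 + L)
  set M := 3*n/L + 1 with hM
  have hN3 : 3*n ≤ L*M := by
    have h1 := Nat.div_add_mod (3*n) L
    have h2 := Nat.mod_lt (3*n) hL
    rw [hM, mul_add]; omega
  have hN4 : L*M ≤ 4*n := by
    have h1 := Nat.mul_div_le (3*n) L
    rw [hM, mul_add]; omega
  have hN3r : (3:ℝ)*n ≤ L*M := by exact_mod_cast hN3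
  have hN4r : (L:ℝ)*M ≤ 4*n := by exact_mod_cast hN4
  have top := top_est t h0 h1 n L h M (sep_D t n (L*M) hN3 hs) (Real.exp (d*n/2))
    (√K * Real.exp (-(b+κ)*(L*M)/2) +
      Real.exp (-d*n/4) * (√K * Real.exp (-(b-κ)*(L*M)/2))) (Real.exp_pos _) (by
      intro X y hX hs1 hy
      refine (hfl M X y hs1 hy).trans ?_
      rw [mul_add]
      refine add_le_add le_rfl ?_
      rw [← mul_assoc (X.card : ℝ)]
      refine mul_le_mul_of_nonneg_right ?_ (by positivity)
      calc Real.exp (d/16*(L*M)) ≤ Real.exp (d*n/2) * Real.exp (-d*n/4) := by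
            rw [← Real.exp_add]; apply Real.exp_le_exp.2; nlinarith
        _ ≤ _ := by gcongr)
  have hq : (1/4:ℝ)^n = Real.exp (-(b+d)*n) := by
    rw [hd, mul_comm, Real.exp_nat_mul, Real.exp_neg, Real.exp_log (by norm_num)]; norm_num
  rw [hq] at top
  have e1 := hKE n
  have e2 := hKE (L*M)
  have e3 := hlow (n + L*M)
  push_cast at e2 e3
  have := final_num b d κ K (4^h) n (L*M) hb0 hd hd0 hκp (min_le_right _ _) hK (by positivity)
    (by positivity) hN3r hN4r (En t n) (En t (L*M)) (En t (n+L*M)) (sq_nonneg _) e1 e2 e3 top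
  exact absurd (hn0 n (by omega)) (not_lt.2 this)

end FC

open Filter Topology

namespace FC
open MeasureTheory Finset

lemma cells (t : ℝ) (n : ℕ) : ∃ m : ℕ, ∃ f : Fin m → ℕ × ℕ, (∀ i, f i ∈ D n ×ˢ D n) ∧
    (∀ i j, i ≠ j → 1 ≤ |((f i).1 + t*(f i).2) - ((f j).1 + t*(f j).2)|) ∧
    1 ≤ 18 * m * En t n := by
  classical
  set P := D n ×ˢ D n with hP
  set v : ℕ × ℕ → ℝ := fun q => q.1 + t*q.2 with hv
  set C : Finset ℤ := P.image (fun q => ⌊v q⌋) with hC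
  set w : ℝ := (1/4:ℝ)^n with hw
  have hw0 : 0 ≤ w := by positivity
  have hmaps : ∀ q ∈ P, ⌊v q⌋ ∈ C := fun q hq => mem_image_of_mem _ hq
  have hcoll : coll P (fun _ => w) v 1 ≤ 9 * En t n := by
    refine (coll_mono P _ v (fun _ _ => hw0) (by norm_num : (1:ℝ) ≤ 4*1)).trans ?_
    have := C2 P (fun _ => w) v (fun _ _ => hw0) (W := 1) (by norm_num)
    refine this.trans (le_of_eq ?_)
    unfold En
    rw [S_expand]
    simp [hv, hw, hP]
  have hcs : 1 ≤ C.card * coll P (fun _ => w) v 1 := by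
    have e1 : (∑ c ∈ C, ∑ q ∈ P with ⌊v q⌋ = c, w) = 1 := by
      rw [sum_fiberwise_of_maps_to hmaps]
      exact sum_w n
    have e2 := sq_sum_le_card_mul_sum_sq (s := C) (f := fun c => ∑ q ∈ P with ⌊v q⌋ = c, w)
    rw [e1, one_pow] at e2
    refine e2.trans (mul_le_mul_of_nonneg_left ?_ (by positivity))
    unfold coll
    rw [← sum_fiberwise_of_maps_to hmaps]
    refine sum_le_sum fun c _ => ?_
    rw [sq, sum_mul_sum]
    refine sum_le_sum fun q hq => ?_
    have hqc := (mem_filter.1 hq).2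
    rw [sum_filter]
    refine sum_le_sum fun q' _ => ?_
    by_cases h : ⌊v q'⌋ = c
    · rw [if_pos h, if_pos (Int.abs_sub_lt_one_of_floor_eq_floor (hqc.trans h.symm))]
    · rw [if_neg h]; split_ifs <;> positivity
  have hE0 : 0 ≤ En t n := sq_nonneg _
  obtain ⟨E, hEC, hEp, hEcard⟩ : ∃ E ⊆ C, (∀ c ∈ E, ∀ c' ∈ E, c ≠ c' → 2 ≤ |c - c'|) ∧
      C.card ≤ 2 * E.card := by
    have hsum := card_filter_add_card_filter_not (s := C) (fun c => c % 2 = 0)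
    rcases le_total (C.filter (fun c => c % 2 = 0)).card (C.filter (fun c => ¬ c % 2 = 0)).card
      with h | h
    · refine ⟨C.filter (fun c => ¬ c % 2 = 0), filter_subset _ _, ?_, by omega⟩
      intro c hc c' hc' hne
      have := (mem_filter.1 hc).2
      have := (mem_filter.1 hc').2
      rw [le_abs]; omega
    · refine ⟨C.filter (fun c => c % 2 = 0), filter_subset _ _, ?_, by omega⟩
      intro c hc c' hc' hne
      have := (mem_filter.1 hc).2
      have := (mem_filter.1 hc').2
      rw [le_abs]; omega
  have hch : ∀ c : E, ∃ q ∈ P, ⌊v q⌋ = (c:ℤ) := fun c => mem_image.1 (hEC c.2)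
  choose g hgP hgv using hch
  refine ⟨E.card, fun i => g (E.equivFin.symm i), fun i => hgP _, ?_, ?_⟩
  · intro i j hij
    set x := E.equivFin.symm i
    set y := E.equivFin.symm j
    have hxy : (x:ℤ) ≠ y := by
      intro h
      exact hij (E.equivFin.symm.injective (Subtype.ext h))
    have h2 := hEp x x.2 y y.2 hxy
    rw [← hgv x, ← hgv y] at h2
    have a1 := Int.floor_le (v (g x))
    have a2 := Int.lt_floor_add_one (v (g x))
    have b1 := Int.floor_le (v (g y))
    have b2 := Int.lt_floor_add_one (v (g y))
    change 1 ≤ |v (g x) - v (g y)|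
    rcases le_abs.1 h2 with h3 | h3
    · have h4 : (2:ℝ) ≤ ⌊v (g x)⌋ - ⌊v (g y)⌋ := by exact_mod_cast h3
      exact le_abs.2 (Or.inl (by linarith))
    · have h4 : (2:ℝ) ≤ -(⌊v (g x)⌋ - ⌊v (g y)⌋) := by exact_mod_cast h3
      exact le_abs.2 (Or.inr (by linarith))
  · have h5 : (C.card:ℝ) ≤ 2 * E.card := by exact_mod_cast hEcard
    calc (1:ℝ) ≤ C.card * (9 * En t n) :=
          hcs.trans (mul_le_mul_of_nonneg_left hcoll (by positivity))
      _ ≤ (2 * E.card) * (9 * En t n) := by gcongr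
      _ = _ := by ring

lemma digit (t : ℝ) (n : ℕ) : ∀ a ∈ D n, ∀ b ∈ D n, ∃ d : ℕ → ℝ, (∀ i, d i ∈ Omega t) ∧
    3*((a:ℝ) + t*b)/4^n = ∑ i ∈ range n, d i / 4^(i+1) := by
  induction n with
  | zero =>
    intro a ha b hb
    refine ⟨fun _ => 0, fun _ => by simp [Omega], ?_⟩
    simp only [D, mem_singleton] at ha hb
    simp [ha, hb]
  | succ n ih =>
    intro a ha b hb
    have key : ∀ a ∈ D (n+1), ∃ a' ∈ D n, ∃ e : ℕ, (e = 0 ∨ e = 1) ∧ a = a' + e * 4^n := by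
      intro a ha
      simp only [D, mem_union, mem_image] at ha
      rcases ha with h | ⟨a', h, rfl⟩
      · exact ⟨a, h, 0, Or.inl rfl, by simp⟩
      · exact ⟨a', h, 1, Or.inr rfl, by simp⟩
    obtain ⟨a', ha', e, he, rfl⟩ := key a ha
    obtain ⟨b', hb', e', he', rfl⟩ := key b hb
    obtain ⟨d, hd, hs⟩ := ih a' ha' b' hb'
    refine ⟨fun i => Nat.casesOn i (3*((e:ℝ)+t*e')) d, ?_, ?_⟩
    · intro i
      cases i with
      | zero =>
        rcases he with rfl | rfl <;> rcases he' with rfl | rfl <;> simp [Omega]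
        right; right; ring
      | succ i => exact hd i
    · rw [sum_range_succ']
      have : ∑ k ∈ range n, d k / (4:ℝ)^(k+1+1) = (∑ k ∈ range n, d k / (4:ℝ)^(k+1)) / 4 := by
        rw [sum_div]
        refine sum_congr rfl fun k _ => ?_
        rw [pow_succ _ (k+1), div_div]
      change _ = ∑ k ∈ range n, d k / (4:ℝ)^(k+1+1) + 3*((e:ℝ)+t*e')/4^(0+1)
      rw [this, ← hs]
      push_cast
      simp only [zero_add, pow_one, pow_succ]
      field_simp
      ring

lemma Omega_bd {t x : ℝ} (h0 : 0 ≤ t) (h1 : t ≤ 1) (hx : x ∈ Omega t) : 0 ≤ x ∧ x ≤ 6 := by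
  simp only [Omega, Set.mem_insert_iff, Set.mem_singleton_iff] at hx
  rcases hx with rfl | rfl | rfl | rfl <;> constructor <;> linarith

lemma hs6 : HasSum (fun i : ℕ => (6:ℝ) / 4^(i+1)) 2 := by
  have := (hasSum_geometric_of_lt_one (r := (1/4:ℝ)) (by norm_num) (by norm_num)).mul_left (6/4)
  convert! this using 1
  · ext i; rw [pow_succ, one_div, inv_pow]; field_simp
  · norm_num

lemma summ {t : ℝ} (h0 : 0 ≤ t) (h1 : t ≤ 1) {d : ℕ → ℝ} (hd : ∀ i, d i ∈ Omega t) :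
    Summable (fun i => d i / 4^(i+1)) := by
  refine Summable.of_nonneg_of_le (fun i => ?_) (fun i => ?_) hs6.summable
  · have := (Omega_bd h0 h1 (hd i)).1; positivity
  · have := (Omega_bd h0 h1 (hd i)).2; gcongr

lemma tsum_bd {t : ℝ} (h0 : 0 ≤ t) (h1 : t ≤ 1) {d : ℕ → ℝ} (hd : ∀ i, d i ∈ Omega t) :
    0 ≤ ∑' i, d i / (4:ℝ)^(i+1) ∧ ∑' i, d i / (4:ℝ)^(i+1) ≤ 2 := by
  constructor
  · refine tsum_nonneg fun i => ?_
    have := (Omega_bd h0 h1 (hd i)).1; positivity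
  · refine hasSum_le (fun i => ?_) (summ h0 h1 hd).hasSum hs6
    have := (Omega_bd h0 h1 (hd i)).2; gcongr

lemma param (t : ℝ) (h0 : 0 ≤ t) (h1 : t ≤ 1) (n m : ℕ) (hn : 1 ≤ n) (f : Fin m → ℕ × ℕ)
    (hf : ∀ i, f i ∈ D n ×ˢ D n)
    (hsep : ∀ i j, i ≠ j → 1 ≤ |((f i).1 + t*(f i).2) - ((f j).1 + t*(f j).2)|) :
    ∃ z : (ℕ → Fin m) → ℝ, (∀ ω, z ω ∈ cornerC t) ∧
      ∀ j : ℕ, ∀ ω ω' : ℕ → Fin m, (∀ i < j, ω i = ω' i) → ω j ≠ ω' j →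
        ((1/4:ℝ)^n)^(j+1) ≤ |z ω - z ω'| := by
  have hd : ∀ i, ∃ d : ℕ → ℝ, (∀ k, d k ∈ Omega t) ∧
      3*(((f i).1:ℝ) + t*(f i).2)/4^n = ∑ k ∈ range n, d k / 4^(k+1) := fun i =>
    digit t n _ (mem_product.1 (hf i)).1 _ (mem_product.1 (hf i)).2
  choose d hdO hds using hd
  set g : (ℕ → Fin m) → ℕ → ℝ := fun ω k => d (ω (k/n)) (k % n) with hg
  have hgO : ∀ ω k, g ω k ∈ Omega t := fun ω k => hdO _ _
  set z : (ℕ → Fin m) → ℝ := fun ω => ∑' k, g ω k / 4^(k+1) with hz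
  have hrec : ∀ ω, z ω = (3*(((f (ω 0)).1:ℝ) + t*(f (ω 0)).2) + z (fun k => ω (k+1)))/4^n := by
    intro ω
    have e1 := (summ h0 h1 (hgO ω)).sum_add_tsum_nat_add n
    have e2 : ∑ k ∈ range n, g ω k / (4:ℝ)^(k+1) = 3*(((f (ω 0)).1:ℝ) + t*(f (ω 0)).2)/4^n := by
      rw [hds]
      refine sum_congr rfl fun k hk => ?_
      have hk := mem_range.1 hk
      simp only [hg, Nat.div_eq_of_lt hk, Nat.mod_eq_of_lt hk]
    have e3 : ∑' k, g ω (k+n) / (4:ℝ)^(k+n+1) = z (fun k => ω (k+1)) / 4^n := by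
      rw [hz]
      simp only
      rw [← tsum_div_const]
      refine tsum_congr fun k => ?_
      have : g ω (k+n) = g (fun k => ω (k+1)) k := by
        simp only [hg]
        rw [Nat.add_div_right _ hn, Nat.add_mod_right]
      rw [this, div_div]
      congr 1
      rw [← pow_add]; congr 1; ring
    rw [e2, e3] at e1
    change ∑' k, g ω k / 4^(k+1) = _
    rw [← e1]; ring
  refine ⟨z, fun ω => ⟨g ω, hgO ω, rfl⟩, ?_⟩
  intro j
  induction j with
  | zero =>
    intro ω ω' _ hne
    rw [hrec ω, hrec ω', ← sub_div, abs_div, abs_of_pos (by positivity : (0:ℝ) < 4^n)]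
    have b1 := tsum_bd h0 h1 (hgO (fun k => ω (k+1)))
    have b2 := tsum_bd h0 h1 (hgO (fun k => ω' (k+1)))
    change 0 ≤ z (fun k => ω (k+1)) ∧ z (fun k => ω (k+1)) ≤ 2 at b1
    change 0 ≤ z (fun k => ω' (k+1)) ∧ z (fun k => ω' (k+1)) ≤ 2 at b2
    rw [zero_add, pow_one, one_div, inv_pow, inv_eq_one_div]
    gcongr
    rcases le_abs.1 (hsep _ _ hne) with h | h
    · exact le_abs.2 (Or.inl (by linarith))
    · exact le_abs.2 (Or.inr (by linarith))
  | succ j ih =>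
    intro ω ω' heq hne
    have := ih (fun k => ω (k+1)) (fun k => ω' (k+1)) (fun i hi => heq (i+1) (by omega)) hne
    rw [hrec ω, hrec ω', heq 0 (by omega), ← sub_div, add_sub_add_left_eq_sub, abs_div,
      abs_of_pos (by positivity : (0:ℝ) < 4^n), pow_succ, le_div_iff₀ (by positivity), mul_assoc,
      ← mul_pow]
    simpa using this

lemma dim_lower (A : Set ℝ) (n m : ℕ) (r : NNReal) (hr : 0 < r) (hm : 1 < m)
    (hmr : ((4:ℝ)^n)^(r:ℝ) ≤ m)
    (z : (ℕ → Fin m) → ℝ) (hzA : ∀ ω, z ω ∈ A)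
    (hz : ∀ j : ℕ, ∀ ω ω' : ℕ → Fin m, (∀ i < j, ω i = ω' i) → ω j ≠ ω' j →
        ((1/4:ℝ)^n)^(j+1) ≤ |z ω - z ω'|) : (r : ENNReal) ≤ dimH A := by
  classical
  have hm0 : (0:ℝ) < m := by positivity
  have hfirst : ∀ ω ω' : ℕ → Fin m, ω ≠ ω' → ∃ j, (∀ i < j, ω i = ω' i) ∧ ω j ≠ ω' j := by
    intro ω ω' hne
    have hex : ∃ j, ω j ≠ ω' j := Function.ne_iff.1 hne
    exact ⟨Nat.find hex, fun i hi => not_not.1 (Nat.find_min hex hi), Nat.find_spec hex⟩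
  have hinj : Function.Injective z := by
    intro ω ω' h
    by_contra hne
    obtain ⟨j, hj, hj'⟩ := hfirst ω ω' hne
    have := hz j ω ω' hj hj'
    rw [h, sub_self, abs_zero] at this
    have : (0:ℝ) < ((1/4:ℝ)^n)^(j+1) := by positivity
    linarith
  have hmain : ∀ ω ω' : ℕ → Fin m, |Real.ofDigits ω - Real.ofDigits ω'| ≤
      m * |z ω - z ω'|^(r:ℝ) := by
    intro ω ω'
    rcases eq_or_ne ω ω' with rfl | hne
    · rw [sub_self, abs_zero]; positivity
    obtain ⟨j, hj, hj'⟩ := hfirst ω ω' hne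
    have h1 := hz j ω ω' hj hj'
    have h2 := Real.abs_ofDigits_sub_ofDigits_le hj
    have h3 : (((1/4:ℝ)^n)^(j+1))^(r:ℝ) ≤ |z ω - z ω'|^(r:ℝ) :=
      Real.rpow_le_rpow (by positivity) h1 r.2
    have h4 : (((1/4:ℝ)^n)^(j+1))^(r:ℝ) = (((4:ℝ)^n)^(r:ℝ))⁻¹^(j+1) := by
      rw [one_div, inv_pow, inv_pow, inv_pow, Real.inv_rpow (by positivity),
        ← Real.rpow_natCast, ← Real.rpow_natCast (((4:ℝ)^n)^(r:ℝ)), ← Real.rpow_mul (by positivity),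
        ← Real.rpow_mul (by positivity), mul_comm]
    have h5 : ((m:ℝ)⁻¹)^(j+1) ≤ (((4:ℝ)^n)^(r:ℝ))⁻¹^(j+1) := by
      gcongr
    calc _ ≤ ((m:ℝ)^j)⁻¹ := h2
      _ = m * ((m:ℝ)⁻¹)^(j+1) := by rw [pow_succ, inv_pow]; field_simp
      _ ≤ m * |z ω - z ω'|^(r:ℝ) := by
        refine mul_le_mul_of_nonneg_left ?_ hm0.le
        rw [← h4] at h5
        exact h5.trans h3
  set φ : ℝ → ℝ := Function.extend z Real.ofDigits 0 with hφ
  have hφz : ∀ ω, φ (z ω) = Real.ofDigits ω := fun ω => hinj.extend_apply _ _ ω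
  have hold : HolderOnWith (m : NNReal) r φ (Set.range z) := by
    rintro _ ⟨ω, rfl⟩ _ ⟨ω', rfl⟩
    rw [hφz, hφz, edist_dist, edist_dist, Real.dist_eq, Real.dist_eq,
      ENNReal.ofReal_rpow_of_nonneg (abs_nonneg _) r.coe_nonneg]
    have : ((m : NNReal) : ENNReal) = ENNReal.ofReal (m:ℝ) := by simp
    rw [this, ← ENNReal.ofReal_mul hm0.le]
    exact ENNReal.ofReal_le_ofReal (hmain ω ω')
  have hd := hold.dimH_image_le hr
  have hsub : Set.Icc (0:ℝ) 1 ⊆ φ '' Set.range z := by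
    intro x hx
    obtain ⟨ω, _, hω⟩ := Real.ofDigits_SurjOn hm hx
    exact ⟨z ω, ⟨ω, rfl⟩, by rw [hφz, hω]⟩
  have h1 : dimH (Set.Icc (0:ℝ) 1) = 1 := by
    have := Real.dimH_of_nonempty_interior (E := ℝ) (s := Set.Icc (0:ℝ) 1) (by
      rw [interior_Icc]; exact ⟨1/2, by norm_num, by norm_num⟩)
    simpa using this
  have h2 : (1:ENNReal) ≤ dimH (Set.range z) / r := by
    rw [← h1]; exact (dimH_mono hsub).trans hd
  have h3 : dimH (Set.range z) ≤ dimH A := dimH_mono (by rintro _ ⟨ω, rfl⟩; exact hzA ω)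
  refine le_trans ?_ h3
  rw [ENNReal.le_div_iff_mul_le (Or.inl (by simpa using hr.ne')) (Or.inl ENNReal.coe_ne_top),
    one_mul] at h2
  exact h2

theorem lower (t : ℝ) (h0 : 0 ≤ t) (h1 : t ≤ 1) (ht : Irrational t) (r : NNReal) (hr : 0 < r)
    (hr1 : r < 1) : (r : ENNReal) ≤ dimH (cornerC t) := by
  have hr1' : (r:ℝ) < 1 := by exact_mod_cast hr1
  have hr0 : (0:ℝ) < r := by exact_mod_cast hr
  have hl4 : 0 < Real.log 4 := Real.log_pos (by norm_num)
  set κ : ℝ := Real.log 4 * (1-r)/2 with hκ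
  have hκ0 : 0 < κ := by
    have : 0 < 1 - (r:ℝ) := by linarith
    positivity
  obtain ⟨K, hK, hE⟩ := decay t h0 h1 ht κ hκ0
  obtain ⟨n, hn1, hn⟩ : ∃ n : ℕ, 1 ≤ n ∧ 18*K ≤ Real.exp (κ*n) := by
    have : Tendsto (fun n : ℕ => Real.exp (κ*n)) atTop atTop :=
      Real.tendsto_exp_atTop.comp
        (tendsto_natCast_atTop_atTop.const_mul_atTop hκ0)
    exact ((eventually_ge_atTop 1).and (this.eventually_ge_atTop (18*K))).exists
  obtain ⟨m, f, hf, hsep, hm⟩ := cells t n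
  obtain ⟨z, hzC, hz⟩ := param t h0 h1 n m hn1 f hf hsep
  have hmr : ((4:ℝ)^n)^(r:ℝ) ≤ m := by
    have e1 : ((4:ℝ)^n)^(r:ℝ) = Real.exp (Real.log 4 * r * n) := by
      rw [Real.rpow_def_of_pos (by positivity), Real.log_pow]; congr 1; ring
    have e2 : (1:ℝ) ≤ m * Real.exp (-(Real.log 4 * r * n)) := by
      calc (1:ℝ) ≤ 18 * m * En t n := hm
        _ ≤ 18 * m * (K * Real.exp (-(Real.log 4 - κ)*n)) := by gcongr; exact hE n
        _ = m * (18 * K) * Real.exp (-(Real.log 4 - κ)*n) := by ring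
        _ ≤ m * Real.exp (κ*n) * Real.exp (-(Real.log 4 - κ)*n) := by gcongr
        _ = m * Real.exp (-(Real.log 4 * r * n)) := by
          rw [mul_assoc, ← Real.exp_add]; congr 2; rw [hκ]; ring
    rw [e1]
    rw [Real.exp_neg, ← div_eq_mul_inv, one_le_div (Real.exp_pos _)] at e2
    exact e2
  have hm1 : 1 < m := by
    have : (1:ℝ) < ((4:ℝ)^n)^(r:ℝ) :=
      Real.one_lt_rpow (one_lt_pow₀ (by norm_num) (by omega)) hr0
    exact_mod_cast this.trans_le hmr
  exact dim_lower (cornerC t) n m r hr hm1 hmr z hzC hz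

end FC

theorem dimH_eq_one_of_irrational (t : ℝ) (ht : t ∈ Set.Ioo (0:ℝ) 1)
    (hirr : Irrational t) :
    dimH (cornerC t) = 1 := by
  apply le_antisymm
  · calc dimH (cornerC t) ≤ dimH (Set.univ : Set ℝ) := dimH_mono (Set.subset_univ _)
      _ = 1 := by rw [Real.dimH_univ_eq_finrank]; simp
  · refine ENNReal.le_of_forall_nnreal_lt fun r hr => ?_
    have hr1 : r < 1 := by exact_mod_cast hr
    rcases (bot_le : (0:NNReal) ≤ r).eq_or_lt with h | h
    · rw [← h]; simp
    · exact FC.lower t ht.1.le ht.2.le hirr r h hr1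
end

section
/- The limit as N → ∞ of (1/N)·∑_{n=1}^{N} φ(2n-1)/(2n-1) exists and equals 8/π², where φ denotes Euler's totient function. -/
open Filter Topology

theorem aux_tot (m : ℕ) (hm : 0 < m) : (Nat.totient m : ℝ) / m = ∑ d ∈ m.divisors, (ArithmeticFunction.moebius d : ℝ) / d := by
  have h := (ArithmeticFunction.sum_eq_iff_sum_mul_moebius_eq (R := ℝ) (f := fun n => (Nat.totient n : ℝ)) (g := fun n => (n:ℝ))).1 (by
    intro n hn
    exact_mod_cast Nat.sum_totient n) m hm
  rw [← h, Finset.sum_div, Nat.sum_divisorsAntidiagonal (f := fun a b => (ArithmeticFunction.moebius a : ℝ) * (b:ℝ) / m)]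
  refine Finset.sum_congr rfl fun d hd => ?_
  have hdm := Nat.dvd_of_mem_divisors hd
  have hd0 : (d:ℝ) ≠ 0 := by exact_mod_cast (Nat.pos_of_mem_divisors hd).ne'
  have hm0 : (m:ℝ) ≠ 0 := by exact_mod_cast hm.ne'
  rw [Nat.cast_div hdm hd0]
  field_simp

theorem aux_summ : Summable (fun d : ℕ => (ArithmeticFunction.moebius d : ℝ) / (d:ℝ)^2) := by
  refine Summable.of_norm_bounded (g := fun d : ℕ => 1 / (d:ℝ)^2) (Real.summable_one_div_nat_pow.2 (by norm_num)) fun d => ?_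
  rw [norm_div, norm_pow, Real.norm_natCast]
  gcongr
  rw [Real.norm_eq_abs]
  exact_mod_cast ArithmeticFunction.abs_moebius_le_one

theorem aux_mu : ∑' d : ℕ, (ArithmeticFunction.moebius d : ℝ) / (d:ℝ)^2 = 6 / Real.pi^2 := by
  have h := ArithmeticFunction.LSeries_zeta_mul_Lseries_moebius (s := 2) (by norm_num)
  rw [ArithmeticFunction.LSeries_zeta_eq_riemannZeta (by norm_num), riemannZeta_two] at h
  have h2 : LSeries (fun n => ((ArithmeticFunction.moebius n : ℤ) : ℂ)) 2 = ((∑' d : ℕ, (ArithmeticFunction.moebius d : ℝ) / (d:ℝ)^2 : ℝ) : ℂ) := by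
    rw [LSeries, Complex.ofReal_tsum]
    refine tsum_congr fun n => ?_
    rcases eq_or_ne n 0 with rfl | hn
    · simp
    · rw [LSeries.term_of_ne_zero hn]
      push_cast
      norm_num
  rw [h2] at h
  have h3 : Real.pi^2/6 * (∑' d : ℕ, (ArithmeticFunction.moebius d : ℝ) / (d:ℝ)^2) = 1 := by exact_mod_cast h
  have := Real.pi_pos
  field_simp
  field_simp at h3
  linarith

theorem aux_two (k : ℕ) : (ArithmeticFunction.moebius (2*k) : ℝ) / ((2*k : ℕ):ℝ)^2 =
    -(1/4) * (if k % 2 = 1 then (ArithmeticFunction.moebius k : ℝ) / (k:ℝ)^2 else 0) := by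
  split_ifs with hk
  · have hc : Nat.Coprime 2 k := (Nat.coprime_two_left).2 (Nat.odd_iff.2 hk)
    rw [ArithmeticFunction.isMultiplicative_moebius.map_mul_of_coprime hc, ArithmeticFunction.moebius_apply_prime Nat.prime_two]
    have : (k:ℝ) ≠ 0 := by norm_cast; omega
    push_cast
    field_simp
    norm_num
  · obtain ⟨j, rfl⟩ : 2 ∣ k := by omega
    rw [ArithmeticFunction.moebius_eq_zero_of_not_squarefree]
    · simp
    · intro h
      have := h 2 ⟨j, by ring⟩
      simp at this

theorem aux_gen (F : ℕ → ℝ) (hs : Summable F)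
    (h3 : ∀ k, F (2*k) = -(1/4) * (if k % 2 = 1 then F k else 0)) :
    ∑' d : ℕ, (if d % 2 = 1 then F d else 0) = 4/3 * ∑' d, F d := by
  have i2 : Function.Injective (fun k : ℕ => 2*k) := fun a b h => by
    simp only at h; omega
  have i3 : Function.Injective (fun k : ℕ => 2*k+1) := fun a b h => by
    simp only at h; omega
  have so : Summable (fun k => F (2*k+1)) := hs.comp_injective i3
  have se : Summable (fun k => F (2*k)) := hs.comp_injective i2
  have h1 := tsum_even_add_odd se so
  obtain ⟨G, hG⟩ : ∃ G : ℕ → ℝ, ∀ d, (if d % 2 = 1 then F d else 0) = G d := ⟨_, fun d => rfl⟩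
  have g0 : ∀ k, G (2*k) = 0 := by
    intro k; rw [← hG, if_neg (by omega)]
  have g1 : ∀ k, G (2*k+1) = F (2*k+1) := by
    intro k; rw [← hG, if_pos (by omega)]
  simp only [hG] at h3 ⊢
  have h2 := tsum_even_add_odd (f := G) (by simp only [g0]; exact summable_zero) (by simp only [g1]; exact so)
  simp only [g0, g1, tsum_zero, zero_add] at h2
  simp only [h3] at h1
  rw [tsum_mul_left, h2] at h1
  rw [← h1]
  ring

theorem aux_odd : ∑' d : ℕ, (if d % 2 = 1 then (ArithmeticFunction.moebius d : ℝ) / (d:ℝ)^2 else 0) = 8 / Real.pi^2 := by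
  rw [aux_gen (fun d : ℕ => (ArithmeticFunction.moebius d : ℝ) / (d:ℝ)^2) aux_summ aux_two, aux_mu]
  ring

theorem aux_cnt (N d : ℕ) (hd : d % 2 = 1) :
    |(((Finset.Icc 1 N).filter (fun n => d ∣ 2*n-1)).card : ℝ) - N / d| ≤ 1 := by
  have he : (Finset.Icc 1 N).filter (fun n => d ∣ 2*n-1) = (Finset.Ioc 0 N).filter (fun n => n ≡ (d+1)/2 [MOD d]) := by
    ext n
    simp only [Finset.mem_filter, Finset.mem_Icc, Finset.mem_Ioc]
    constructor
    · rintro ⟨h1, h2⟩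
      refine ⟨by omega, ?_⟩
      obtain ⟨e, rfl⟩ : ∃ e, d = 2*e+1 := ⟨d/2, by omega⟩
      have e1 : (2*e+1+1)/2 = e+1 := by omega
      rw [e1]
      refine (Nat.ModEq.symm ?_)
      rw [Nat.modEq_iff_dvd]
      have h3 : ((2*e+1 : ℕ) : ℤ) ∣ 2 * ((n:ℤ) - ((e+1 : ℕ):ℤ)) := by
        have : ((2*e+1 : ℕ) : ℤ) ∣ ((2*n-1 : ℕ) : ℤ) := by exact_mod_cast h2
        have h4 : (2 * ((n:ℤ) - ((e+1 : ℕ):ℤ))) = ((2*n-1 : ℕ) : ℤ) - ((2*e+1 : ℕ) : ℤ) := by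
          push_cast [show 1 ≤ 2*n by omega]
          ring
        rw [h4]
        exact dvd_sub this dvd_rfl
      refine IsCoprime.dvd_of_dvd_mul_left ?_ h3
      exact ⟨1, -e, by push_cast; ring⟩
    · rintro ⟨h1, h2⟩
      refine ⟨by omega, ?_⟩
      obtain ⟨e, rfl⟩ : ∃ e, d = 2*e+1 := ⟨d/2, by omega⟩
      have e1 : (2*e+1+1)/2 = e+1 := by omega
      rw [e1] at h2
      have h3 := (Nat.modEq_iff_dvd).1 h2.symm
      have h4 : ((2*n-1 : ℕ) : ℤ) = 2 * ((n:ℤ) - ((e+1 : ℕ):ℤ)) + ((2*e+1 : ℕ) : ℤ) := by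
        push_cast [show 1 ≤ 2*n by omega]
        ring
      have : ((2*e+1 : ℕ) : ℤ) ∣ ((2*n-1 : ℕ) : ℤ) := by
        rw [h4]
        exact dvd_add (h3.mul_left 2) dvd_rfl
      exact_mod_cast this
  rw [he]
  have hd0 : 0 < d := by omega
  have h := Nat.Ioc_filter_modEq_card 0 N hd0 ((d+1)/2)
  have hv : ((((d+1)/2 : ℕ) : ℚ)) = (d+1)/2 := by
    rw [Nat.cast_div (by omega) (by norm_num)]; push_cast; ring
  generalize ((Finset.Ioc 0 N).filter (fun n => n ≡ (d+1)/2 [MOD d])).card = c at *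
  have hdq : (0:ℚ) < d := by exact_mod_cast hd0
  set A := ⌊((N:ℚ) - (((d+1)/2 : ℕ) : ℚ)) / d⌋ with hA
  set B := ⌊(((0:ℕ):ℚ) - (((d+1)/2 : ℕ) : ℚ)) / d⌋ with hB
  have hAB : B ≤ A := by
    apply Int.floor_le_floor
    gcongr
    simp
  rw [max_eq_left (by omega)] at h
  have a1 := Int.floor_le (((N:ℚ) - (((d+1)/2 : ℕ) : ℚ)) / d)
  have a2 := Int.lt_floor_add_one (((N:ℚ) - (((d+1)/2 : ℕ) : ℚ)) / d)
  have b1 := Int.floor_le ((((0:ℕ):ℚ) - (((d+1)/2 : ℕ) : ℚ)) / d)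
  have b2 := Int.lt_floor_add_one ((((0:ℕ):ℚ) - (((d+1)/2 : ℕ) : ℚ)) / d)
  rw [← hA] at a1 a2
  rw [← hB] at b1 b2
  rw [sub_div] at a1 a2 b1 b2
  simp only [Nat.cast_zero, zero_div] at b1 b2
  have hq : (c:ℚ) = A - B := by exact_mod_cast h
  have : |(c:ℚ) - N / d| ≤ 1 := by
    rw [hq, abs_le]; constructor <;> linarith
  have h5 : ((|(c:ℚ) - N / d| : ℚ) : ℝ) ≤ ((1:ℚ):ℝ) := by exact_mod_cast this
  push_cast at h5
  exact h5

theorem aux_even (N d : ℕ) (hd : ¬ d % 2 = 1) :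
    ((Finset.Icc 1 N).filter (fun n => d ∣ 2*n-1)).card = 0 := by
  rw [Finset.card_eq_zero, Finset.filter_eq_empty_iff]
  intro n hn h
  have h1 := Finset.mem_Icc.1 hn
  have : 2 ∣ 2*n-1 := (show 2 ∣ d by omega).trans h
  omega

theorem aux_big (N d : ℕ) (hd : 2*N ≤ d) :
    ((Finset.Icc 1 N).filter (fun n => d ∣ 2*n-1)).card = 0 := by
  rw [Finset.card_eq_zero, Finset.filter_eq_empty_iff]
  intro n hn h
  have h1 := Finset.mem_Icc.1 hn
  have := Nat.le_of_dvd (by omega) h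
  omega

theorem aux_bd (N d : ℕ) (hN : 0 < N) :
    (1 / (N:ℝ)) * (((Finset.Icc 1 N).filter (fun n => d ∣ 2*n-1)).card : ℝ) ≤ 3 / d := by
  by_cases h1 : d % 2 = 1
  swap
  · rw [aux_even N d h1]; simp; positivity
  by_cases h2 : 2*N ≤ d
  · rw [aux_big N d h2]; simp; positivity
  have h := (abs_le.1 (aux_cnt N d h1)).2
  have hN' : (0:ℝ) < N := by exact_mod_cast hN
  have hd' : (0:ℝ) < d := by norm_cast; omega
  have h3 : (d:ℝ) ≤ 2*N := by norm_cast; omega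
  have h4 : (1:ℝ) ≤ 2*N/d := by rwa [le_div_iff₀ hd', one_mul]
  have e : (3:ℝ)/d = 1/N * (3 * N/d) := by field_simp
  rw [e]
  gcongr
  have : 3*(N:ℝ)/d = N/d + 2*N/d := by ring
  linarith

theorem aux_lim (d : ℕ) (hd : d % 2 = 1) :
    Tendsto (fun N : ℕ => (1 / (N:ℝ)) * (((Finset.Icc 1 N).filter (fun n => d ∣ 2*n-1)).card : ℝ))
      atTop (𝓝 (1 / d)) := by
  rw [tendsto_iff_norm_sub_tendsto_zero]
  refine squeeze_zero' (Eventually.of_forall fun _ => norm_nonneg _) ?_ tendsto_one_div_atTop_nhds_zero_nat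
  filter_upwards [eventually_gt_atTop 0] with N hN
  have hN' : (0:ℝ) < N := by exact_mod_cast hN
  have h := aux_cnt N d hd
  have e : ∀ c : ℝ, 1/(N:ℝ) * c - 1/d = 1/N * (c - N/d) := by
    intro c; field_simp
  rw [e, norm_mul, Real.norm_of_nonneg (by positivity), Real.norm_eq_abs]
  calc _ ≤ 1/(N:ℝ) * 1 := by gcongr
    _ = _ := mul_one _

theorem totient_odd_average :
    Tendsto (fun N : ℕ =>
        (1 / (N : ℝ)) *
          ∑ n ∈ Finset.Icc 1 N, (Nat.totient (2*n-1) : ℝ) / (2*n-1))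
      atTop (𝓝 (8 / Real.pi^2)) := by
  rw [← aux_odd]
  have key := tendsto_tsum_of_dominated_convergence (𝓕 := atTop)
    (f := fun (N d : ℕ) => (ArithmeticFunction.moebius d : ℝ) / d *
      ((1 / (N:ℝ)) * (((Finset.Icc 1 N).filter (fun n => d ∣ 2*n-1)).card : ℝ)))
    (g := fun d : ℕ => if d % 2 = 1 then (ArithmeticFunction.moebius d : ℝ) / (d:ℝ)^2 else 0)
    (bound := fun d : ℕ => 3 * (1 / (d:ℝ)^2))
    ((Real.summable_one_div_nat_pow.2 (by norm_num)).mul_left 3) ?_ ?_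
  · refine key.congr' ?_
    filter_upwards with N
    rw [tsum_eq_sum (s := Finset.range (2*N))]
    · have e : ∀ n ∈ Finset.Icc 1 N, (Nat.totient (2*n-1) : ℝ) / (2*n-1) =
          ∑ d ∈ Finset.range (2*N), if d ∣ 2*n-1 then (ArithmeticFunction.moebius d : ℝ) / d else 0 := by
        intro n hn
        have h1 := Finset.mem_Icc.1 hn
        have h := aux_tot (2*n-1) (by omega)
        have hc : ((2*n-1 : ℕ) : ℝ) = 2*n-1 := by
          push_cast [show 1 ≤ 2*n by omega]; ring
        rw [hc] at h
        rw [h, ← Finset.sum_filter]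
        refine Finset.sum_congr ?_ fun _ _ => rfl
        ext d
        simp only [Nat.mem_divisors, Finset.mem_filter, Finset.mem_range]
        constructor
        · rintro ⟨h2, h3⟩
          have := Nat.le_of_dvd (by omega) h2
          exact ⟨by omega, h2⟩
        · rintro ⟨h2, h3⟩
          exact ⟨h3, by omega⟩
      rw [Finset.sum_congr rfl e, Finset.sum_comm, Finset.mul_sum]
      refine Finset.sum_congr rfl fun d _ => ?_
      rw [← Finset.sum_filter, Finset.sum_const, nsmul_eq_mul]
      ring
    · intro d hd
      rw [aux_big N d (by simpa using hd)]
      simp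
  · intro d
    by_cases hd : d % 2 = 1
    · simp only [hd, if_true]
      have := (aux_lim d hd).const_mul ((ArithmeticFunction.moebius d : ℝ) / d)
      convert this using 2
      rw [div_mul_div_comm, mul_one, sq]
    · simp only [hd, if_false, aux_even _ d hd]
      simp
  · filter_upwards [eventually_gt_atTop 0] with N hN d
    have hb := aux_bd N d hN
    have hm : |(ArithmeticFunction.moebius d : ℝ)| ≤ 1 := by
      exact_mod_cast ArithmeticFunction.abs_moebius_le_one
    rw [norm_mul, norm_div, Real.norm_natCast, Real.norm_eq_abs, Real.norm_of_nonneg (by positivity)]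
    calc _ ≤ 1 / (d:ℝ) * (3 / d) := by gcongr
      _ = _ := by ring
end
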